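/- arXiv:2308.16728 — 2 statements merged into one kernel-verified Lean document; each statement's English description precedes it below -/
import Mathlib

section
/- For every real ε > 0 there exists r₀ such that for all integers r ≥ r₀ one has (1 − ε) · r ≤ f_3(r, {𝒞_2^{(3)}, 𝒞_3^{(3)}, 𝒞_4^{(3)}}) ≤ (1 + ε) · r. -/
/-- An `m`-uniform edge set: every edge has exactly `m` vertices. -/
def IsUniform (m : ℕ) {n : ℕ} (E : Finset (Finset (Fin n))) : Prop :=
  ∀ e ∈ E, e.card = m

/-- The hypergraph with edge set `GE` contains a subhypergraph isomorphic to the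
hypergraph with edge set `HE`: there is an injection of vertices sending every edge
of `HE` to an edge of `GE`. -/
def HypContains {n N : ℕ} (HE : Finset (Finset (Fin n))) (GE : Finset (Finset (Fin N))) : Prop :=
  ∃ f : Fin n → Fin N, Function.Injective f ∧ ∀ e ∈ HE, e.image f ∈ GE

/-- The hypergraph with edge set `GE` is an `(r,k)`-hypergraph (`m`-uniform setting):
its vertex set can be partitioned into `r` parts of size at most `k` so that for every
`m`-element set of parts there is an edge meeting each of those parts in exactly one vertex. -/
def IsRKHyper {N : ℕ} (GE : Finset (Finset (Fin N))) (m r k : ℕ) : Prop :=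
  ∃ P : Fin r → Finset (Fin N),
    (∀ v : Fin N, ∃! i, v ∈ P i) ∧
    (∀ i, (P i).card ≤ k) ∧
    ∀ S : Finset (Fin r), S.card = m → ∃ e ∈ GE, ∀ i ∈ S, (e ∩ P i).card = 1

/-- A hypergraph: a number of vertices together with an edge set. -/
abbrev Hyp := (n : ℕ) × Finset (Finset (Fin n))

/-- `f_m(r, ℋ)`: the minimum `k` for which there is an `ℋ`-free `m`-uniform
`(r,k)`-hypergraph. -/
noncomputable def fHyper (m r : ℕ) (ℋ : Set Hyp) : ℕ :=
  sInf {k | ∃ (N : ℕ) (GE : Finset (Finset (Fin N))),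
    IsUniform m GE ∧ (∀ H ∈ ℋ, ¬ HypContains H.2 GE) ∧ IsRKHyper GE m r k}

/-- A hypergraph is a Berge cycle of length `ℓ` (in the `m`-uniform setting) if it is
`m`-uniform and there are distinct vertices `v_1,…,v_ℓ` and distinct edges `e_1,…,e_ℓ`
(the edges of the hypergraph being exactly `e_1,…,e_ℓ`) with `{v_i, v_{i+1}} ⊆ e_i`
for all `i`, indices modulo `ℓ`. -/
def IsBergeCycle (m ℓ : ℕ) (H : Hyp) : Prop :=
  IsUniform m H.2 ∧
  ∃ (v : ZMod ℓ → Fin H.1) (e : ZMod ℓ → Finset (Fin H.1)),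
    Function.Injective v ∧ Function.Injective e ∧
    (∀ i, e i ∈ H.2) ∧ (∀ b ∈ H.2, ∃ i, e i = b) ∧
    ∀ i, ({v i, v (i + 1)} : Finset (Fin H.1)) ⊆ e i

/-- `𝒞_ℓ^{(m)}`: the family of all `m`-uniform hypergraphs that are Berge cycles
of length `ℓ`. -/
def bergeCycles (m ℓ : ℕ) : Set Hyp := {H | IsBergeCycle m ℓ H}

/-!
The shadow graph of a 3-uniform hypergraph without Berge cycles of length 2, 3 or 4 has no 4-cycle
and three times as many edges. For an `(r, k)`-hypergraph it has at most `r k` vertices and at least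
`3 (r choose 3)` edges, so counting paths of length two gives `r ≤ k + 3`.

Conversely, over a field with `q` elements, `q` odd, the graph joining `(i, x)` to `(j, y)` when
`i ≠ j` and `x + y = a i * a j` has no 4-cycle, and any three distinct abscissae carry a triangle.
The triangles of such a graph form a 3-graph without Berge cycles of length 2, 3 or 4, whence
`f_3(r) ≤ q` for `r ≤ q`.

It remains to find a prime `q` in `[r, (1 + ε) r]`. As `ζ` does not vanish on `Re s = 1`, the
function `∑ Λ(n)/n^s - 1/(s - 1)` extends continuously to that line. Integrating the extension
against the triangle function, the Riemann–Lebesgue lemma shows that `∑ Λ(n)/n * K_l(y - log n)`,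
with `K_l` the Fejér kernel, is at least `2` for large `y`. By Chebyshev's bound the terms with
`|y - log n| ≥ δ` contribute only `O(1/l)`, so for large `l` the short interval has `Λ`-mass at
least `c x` with `c > 0`; proper prime powers account for only `O(√x)` of it.
-/

section FejerKernel

open Complex MeasureTheory

/-- The triangle function `t ↦ 1 - |t| / l`, meant for `|t| ≤ l`. -/
noncomputable def triangle (l t : ℝ) : ℝ := 1 - |t| / l

/-- The Fejér kernel `u ↦ l (sin (l u / 2) / (l u / 2)) ^ 2`, in the normalisation in which it is
the Fourier transform of the triangle function. -/
noncomputable def fejerKernel (l u : ℝ) : ℝ := l * Real.sinc (l * u / 2) ^ 2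

variable {l : ℝ}

@[fun_prop]
lemma continuous_triangle : Continuous (triangle l) := by
  unfold triangle
  fun_prop

lemma abs_triangle_le_one {t : ℝ} (ht : |t| ≤ l) : |triangle l t| ≤ 1 := by
  have h0 : 0 ≤ |t| / l := div_nonneg (abs_nonneg t) ((abs_nonneg t).trans ht)
  have h1 : |t| / l ≤ 1 := div_le_one_of_le₀ ht ((abs_nonneg t).trans ht)
  exact abs_le.2 ⟨by unfold triangle; linarith, by unfold triangle; linarith⟩

@[fun_prop]
lemma continuous_fejerKernel : Continuous (fejerKernel l) := by
  unfold fejerKernel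
  fun_prop

lemma fejerKernel_nonneg (hl : 0 < l) (u : ℝ) : 0 ≤ fejerKernel l u := by
  unfold fejerKernel
  positivity

lemma fejerKernel_le (hl : 0 < l) (u : ℝ) : fejerKernel l u ≤ l :=
  mul_le_of_le_one_right hl.le ((sq_le_one_iff_abs_le_one _).2 (Real.abs_sinc_le_one _))

lemma fejerKernel_mul_sq (hl : l ≠ 0) (u : ℝ) :
    fejerKernel l u * u ^ 2 = 4 / l * Real.sin (l * u / 2) ^ 2 := by
  rcases eq_or_ne u 0 with rfl | hu
  · simp
  · rw [fejerKernel, Real.sinc_of_ne_zero (by positivity)]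
    field_simp
    ring

lemma fejerKernel_mul_sq_le (hl : 0 < l) (u : ℝ) : fejerKernel l u * u ^ 2 ≤ 4 / l := by
  rw [fejerKernel_mul_sq hl.ne']
  exact mul_le_of_le_one_right (by positivity) (Real.sin_sq_le_one _)

lemma fejerKernel_le_div_one_add_sq (hl : 0 < l) (u : ℝ) :
    fejerKernel l u ≤ (l + 4 / l) / (1 + u ^ 2) := by
  rw [le_div_iff₀ (by positivity)]
  linarith [fejerKernel_le hl u, fejerKernel_mul_sq_le hl u]

lemma fejerKernel_le_div_one_add_sq_of_le_abs (hl : 0 < l) {δ u : ℝ} (hδ : 0 < δ)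
    (hu : δ ≤ |u|) : fejerKernel l u ≤ 4 / l * (1 + 1 / δ ^ 2) / (1 + u ^ 2) := by
  have hδu : 1 + u ^ 2 ≤ u ^ 2 * (1 + 1 / δ ^ 2) := by
    have : 1 ≤ u ^ 2 / δ ^ 2 := by
      rw [one_le_div (by positivity), ← sq_abs u]
      gcongr
    linarith [mul_one_div (u ^ 2) (δ ^ 2)]
  rw [le_div_iff₀ (by positivity)]
  calc fejerKernel l u * (1 + u ^ 2)
      ≤ fejerKernel l u * (u ^ 2 * (1 + 1 / δ ^ 2)) := by
        gcongr
        exact fejerKernel_nonneg hl u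
    _ = fejerKernel l u * u ^ 2 * (1 + 1 / δ ^ 2) := by ring
    _ ≤ 4 / l * (1 + 1 / δ ^ 2) := by
        gcongr
        exact fejerKernel_mul_sq_le hl u

lemma two_div_pi_le_sinc {x : ℝ} (hx : |x| ≤ Real.pi / 2) : 2 / Real.pi ≤ Real.sinc x := by
  wlog h0 : 0 ≤ x generalizing x
  · rw [← Real.sinc_neg]
    exact this (by rwa [abs_neg]) (by linarith)
  rcases h0.eq_or_lt with rfl | h0
  · rw [Real.sinc_zero, div_le_one Real.pi_pos]
    exact Real.two_le_pi
  · rw [Real.sinc_of_ne_zero h0.ne', le_div_iff₀ h0]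
    exact Real.mul_le_sin h0.le ((le_abs_self x).trans hx)

lemma le_fejerKernel (hl : 0 < l) {u : ℝ} (hu : |u| ≤ Real.pi / l) :
    l * (2 / Real.pi) ^ 2 ≤ fejerKernel l u := by
  have : |l * u / 2| ≤ Real.pi / 2 := by
    rw [abs_div, abs_mul, abs_of_pos hl, abs_two]
    gcongr
    rwa [le_div_iff₀' hl] at hu
  unfold fejerKernel
  gcongr
  exact two_div_pi_le_sinc this

lemma integrable_fejerKernel (hl : 0 < l) : Integrable (fejerKernel l) := by
  refine (integrable_inv_one_add_sq.const_mul (l + 4 / l)).mono'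
    continuous_fejerKernel.aestronglyMeasurable (.of_forall fun u ↦ ?_)
  rw [Real.norm_of_nonneg (fejerKernel_nonneg hl u), ← div_eq_mul_inv]
  exact fejerKernel_le_div_one_add_sq hl u

lemma integral_one_sub_div_mul_cos (hl : l ≠ 0) (u : ℝ) :
    ∫ t in (0 : ℝ)..l, 2 * (1 - t / l) * Real.cos (t * u) = fejerKernel l u := by
  rcases eq_or_ne u 0 with rfl | hu
  · suffices 2 * (l - l ^ 2 / 2 / l) = l by simpa [fejerKernel]
    field_simp
    norm_num
  have hderiv (t : ℝ) : HasDerivAt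
      (fun t ↦ 2 * (1 - t / l) * (Real.sin (t * u) / u) - 2 / l * (Real.cos (t * u) / u ^ 2))
      (2 * (1 - t / l) * Real.cos (t * u)) t := by
    have harg : HasDerivAt (fun t : ℝ ↦ t * u) u t := by simpa using (hasDerivAt_id t).mul_const u
    have hlin : HasDerivAt (fun t : ℝ ↦ 2 * (1 - t / l)) (2 * -(1 / l)) t :=
      (((hasDerivAt_id t).div_const l).const_sub 1).const_mul 2
    refine ((hlin.mul (harg.sin.div_const u)).sub
      ((harg.cos.div_const (u ^ 2)).const_mul (2 / l))).congr_deriv ?_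
    field_simp
    ring
  have hfejer : fejerKernel l u = 4 / l * Real.sin (l * u / 2) ^ 2 / u ^ 2 := by
    rw [← fejerKernel_mul_sq hl, mul_div_cancel_right₀ _ (pow_ne_zero 2 hu)]
  rw [intervalIntegral.integral_eq_sub_of_hasDerivAt (fun t _ ↦ hderiv t)
    ((by fun_prop : Continuous fun t : ℝ ↦ 2 * (1 - t / l) * Real.cos (t * u)).intervalIntegrable
      _ _), hfejer, Real.sin_sq_eq_half_sub, mul_div_cancel₀ _ two_ne_zero, div_self hl,
    zero_mul, zero_div, Real.sin_zero, Real.cos_zero]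
  ring

theorem integral_triangle_mul_exp (hl : 0 < l) (u : ℝ) :
    ∫ t in (-l)..l, (triangle l t : ℂ) * cexp (t * u * I) = fejerKernel l u := by
  have hcont : Continuous fun t : ℝ ↦ (triangle l t : ℂ) * cexp (t * u * I) := by fun_prop
  have hcont_neg : Continuous fun t : ℝ ↦ (triangle l (-t) : ℂ) * cexp ((-t : ℝ) * u * I) := by
    fun_prop
  have hreflect := intervalIntegral.integral_comp_neg
    (f := fun t : ℝ ↦ (triangle l t : ℂ) * cexp (t * u * I)) (a := 0) (b := l)
  rw [neg_zero] at hreflect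
  rw [← intervalIntegral.integral_add_adjacent_intervals (b := 0) (hcont.intervalIntegrable _ _)
      (hcont.intervalIntegrable _ _), ← hreflect,
    ← intervalIntegral.integral_add (hcont_neg.intervalIntegrable _ _)
      (hcont.intervalIntegrable _ _),
    ← integral_one_sub_div_mul_cos hl.ne', ← intervalIntegral.integral_ofReal]
  refine intervalIntegral.integral_congr fun t ht ↦ ?_
  rw [Set.uIcc_of_le hl.le] at ht
  simp only [triangle, abs_neg, abs_of_nonneg ht.1]
  push_cast
  rw [Complex.cos, neg_mul, neg_mul]
  ring

end FejerKernel

section ChebyshevBound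

lemma one_div_one_add_sq_le {a b : ℝ} (hab : |a - b| ≤ 1) : 1 / (1 + a ^ 2) ≤ 3 / (1 + b ^ 2) := by
  have hsq : (a - b) ^ 2 ≤ 1 := (sq_le_one_iff_abs_le_one _).2 hab
  rw [div_le_div_iff₀ (by positivity) (by positivity)]
  linarith [sq_nonneg a, sq_nonneg (2 * a - b)]

lemma summable_one_div_one_add_int_sq : Summable fun k : ℤ ↦ 1 / (1 + (k : ℝ) ^ 2) := by
  refine Summable.of_norm_bounded_eventually (Real.summable_one_div_int_pow.2 one_lt_two) ?_
  filter_upwards [(Set.finite_singleton (0 : ℤ)).compl_mem_cofinite] with k hk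
  have hk0 : (k : ℝ) ≠ 0 := by exact_mod_cast hk
  rw [Real.norm_of_nonneg (by positivity)]
  gcongr
  linarith

variable {f : ℕ → ℝ} {C : ℝ}

lemma sum_filter_floor_log_div_le (hf : ∀ n, 0 ≤ f n)
    (hC : ∀ n : ℕ, ∑ k ∈ Finset.Ioc 0 n, f k ≤ C * n) (s : Finset ℕ) (j : ℤ) :
    ∑ n ∈ s with ⌊Real.log (n : ℕ)⌋ = j, f n / n ≤ C * Real.exp 1 := by
  have hC0 : 0 ≤ C := by simpa using (hf 1).trans (by simpa using hC 1)
  have hblock {n : ℕ} (hn : n ∈ {n ∈ s | ⌊Real.log (n : ℕ)⌋ = j}) (hn0 : n ≠ 0) :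
      Real.exp j ≤ n ∧ n ≤ Real.exp (j + 1) := by
    have hpos : (0 : ℝ) < n := by positivity
    obtain ⟨hle, hlt⟩ := Int.floor_eq_iff.1 (Finset.mem_filter.1 hn).2
    exact ⟨(Real.le_log_iff_exp_le hpos).1 hle, (Real.log_le_iff_le_exp hpos).1 hlt.le⟩
  calc ∑ n ∈ s with ⌊Real.log (n : ℕ)⌋ = j, f n / n
      = ∑ n ∈ {n ∈ s | ⌊Real.log (n : ℕ)⌋ = j} with n ≠ 0, f n / n := by
        refine (Finset.sum_filter_of_ne (p := (· ≠ 0)) fun n _ hne hn ↦ hne ?_).symm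
        rw [hn, Nat.cast_zero, div_zero]
    _ ≤ ∑ n ∈ {n ∈ s | ⌊Real.log (n : ℕ)⌋ = j} with n ≠ 0, f n * Real.exp (-j) := by
        refine Finset.sum_le_sum fun n hn ↦ ?_
        obtain ⟨hn, hn0⟩ := Finset.mem_filter.1 hn
        rw [div_eq_mul_inv, Real.exp_neg]
        gcongr
        exacts [hf n, (hblock hn hn0).1]
    _ ≤ ∑ n ∈ Finset.Ioc 0 ⌊Real.exp (j + 1)⌋₊, f n * Real.exp (-j) := by
        refine Finset.sum_le_sum_of_subset_of_nonneg (fun n hn ↦ ?_)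
          fun n _ _ ↦ mul_nonneg (hf n) (Real.exp_pos _).le
        obtain ⟨hn, hn0⟩ := Finset.mem_filter.1 hn
        exact Finset.mem_Ioc.2 ⟨Nat.pos_of_ne_zero hn0, Nat.le_floor (hblock hn hn0).2⟩
    _ ≤ C * Real.exp (j + 1) * Real.exp (-j) := by
        rw [← Finset.sum_mul]
        gcongr
        refine (hC _).trans ?_
        gcongr
        exact Nat.floor_le (Real.exp_pos _).le
    _ = C * Real.exp 1 := by
        rw [mul_assoc, ← Real.exp_add, add_neg_cancel_comm]

theorem exists_sum_div_div_one_add_sq_le (hf : ∀ n, 0 ≤ f n)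
    (hC : ∀ n : ℕ, ∑ k ∈ Finset.Ioc 0 n, f k ≤ C * n) :
    ∃ B : ℝ, ∀ (y : ℝ) (s : Finset ℕ), ∑ n ∈ s, f n / n / (1 + (y - Real.log n) ^ 2) ≤ B := by
  refine ⟨3 * (C * Real.exp 1) * ∑' k : ℤ, 1 / (1 + (k : ℝ) ^ 2), fun y s ↦ ?_⟩
  have hC0 : 0 ≤ C := by simpa using (hf 1).trans (by simpa using hC 1)
  have hweight {j : ℤ} {n : ℕ} (hj : ⌊Real.log n⌋ = j) :
      1 / (1 + (y - Real.log n) ^ 2) ≤ 3 / (1 + ((⌊y⌋ - j : ℤ) : ℝ) ^ 2) := by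
    obtain ⟨hle, hlt⟩ := Int.floor_eq_iff.1 hj
    push_cast
    exact one_div_one_add_sq_le
      (abs_le.2 ⟨by linarith [Int.floor_le y], by linarith [Int.lt_floor_add_one y]⟩)
  set J := s.image fun n : ℕ ↦ ⌊Real.log n⌋
  calc ∑ n ∈ s, f n / n / (1 + (y - Real.log n) ^ 2)
      = ∑ j ∈ J, ∑ n ∈ s with ⌊Real.log (n : ℕ)⌋ = j, f n / n / (1 + (y - Real.log n) ^ 2) :=
        (Finset.sum_fiberwise_of_maps_to (fun n hn ↦ Finset.mem_image_of_mem _ hn) _).symm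
    _ ≤ ∑ j ∈ J, ∑ n ∈ s with ⌊Real.log (n : ℕ)⌋ = j,
          f n / n * (3 / (1 + ((⌊y⌋ - j : ℤ) : ℝ) ^ 2)) := by
        gcongr with j _ n hn
        rw [div_eq_mul_one_div]
        exact mul_le_mul_of_nonneg_left (hweight (Finset.mem_filter.1 hn).2)
          (div_nonneg (hf n) n.cast_nonneg)
    _ ≤ ∑ j ∈ J, C * Real.exp 1 * (3 / (1 + ((⌊y⌋ - j : ℤ) : ℝ) ^ 2)) := by
        gcongr with j
        rw [← Finset.sum_mul]
        gcongr
        exact sum_filter_floor_log_div_le hf hC s j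
    _ = 3 * (C * Real.exp 1) * ∑ j ∈ J, 1 / (1 + ((⌊y⌋ - j : ℤ) : ℝ) ^ 2) := by
        rw [Finset.mul_sum]
        exact Finset.sum_congr rfl fun j _ ↦ by ring
    _ ≤ 3 * (C * Real.exp 1) * ∑' j : ℤ, 1 / (1 + ((⌊y⌋ - j : ℤ) : ℝ) ^ 2) := by
        gcongr
        exact ((Equiv.subLeft ⌊y⌋).summable_iff.2 summable_one_div_one_add_int_sq).sum_le_tsum _
          fun j _ ↦ by positivity
    _ = 3 * (C * Real.exp 1) * ∑' k : ℤ, 1 / (1 + (k : ℝ) ^ 2) := by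
        rw [← (Equiv.subLeft ⌊y⌋).tsum_eq fun k : ℤ ↦ 1 / (1 + (k : ℝ) ^ 2)]
        rfl

lemma LSeriesSummable_of_sum_le (hf : ∀ n, 0 ≤ f n)
    (hC : ∀ n : ℕ, ∑ k ∈ Finset.Ioc 0 n, f k ≤ C * n) {s : ℂ} (hs : 1 < s.re) :
    LSeriesSummable (fun n ↦ f n) s := by
  refine LSeriesSummable_of_sum_norm_bigO_and_nonneg (r := 1) ?_ hf zero_le_one hs
  refine .of_bound C (.of_forall fun n ↦ ?_)
  rw [Real.rpow_one, Real.norm_of_nonneg (Finset.sum_nonneg fun k _ ↦ hf k), Real.norm_natCast]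
  exact hC n

end ChebyshevBound

section SmoothedSum

open Complex MeasureTheory Filter Topology

lemma LSeries_term_add_mul_I (f : ℕ → ℂ) (s : ℂ) (t : ℝ) (n : ℕ) :
    LSeries.term f (s + t * I) n = LSeries.term f s n * cexp (-(t * Real.log n * I)) := by
  rcases eq_or_ne n 0 with rfl | hn
  · simp only [LSeries.term_zero, zero_mul]
  · have hn' : (n : ℂ) ≠ 0 := Nat.cast_ne_zero.2 hn
    rw [LSeries.term_of_ne_zero hn, LSeries.term_of_ne_zero hn, cpow_add _ _ hn',
      cpow_def_of_ne_zero hn' (t * I), ← natCast_log, Complex.exp_neg, ← div_div, div_eq_mul_inv]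
    congr 3
    ring

lemma norm_exp_mul_mul_I (t u : ℝ) : ‖cexp (t * u * I)‖ = 1 := by
  rw [← ofReal_mul]
  exact norm_exp_ofReal_mul_I _

variable {l : ℝ}

theorem hasSum_term_mul_fejerKernel (hl : 0 < l) {f : ℕ → ℂ} {s : ℂ} (hs : LSeriesSummable f s)
    (y : ℝ) :
    HasSum (fun n : ℕ ↦ LSeries.term f s n * fejerKernel l (y - Real.log n))
      (∫ t in (-l)..l, (triangle l t : ℂ) * cexp (t * y * I) * LSeries f (s + t * I)) := by
  have hcoeff (n : ℕ) :
      ∫ t in (-l)..l, (triangle l t : ℂ) * cexp (t * y * I) * LSeries.term f (s + t * I) n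
        = LSeries.term f s n * fejerKernel l (y - Real.log n) := by
    rw [← integral_triangle_mul_exp hl, ← intervalIntegral.integral_const_mul]
    refine intervalIntegral.integral_congr fun t _ ↦ ?_
    simp only [LSeries_term_add_mul_I]
    rw [ofReal_sub, mul_sub, sub_mul, sub_eq_add_neg, Complex.exp_add]
    ring
  simp only [← hcoeff]
  refine intervalIntegral.hasSum_integral_of_dominated_convergence
    (bound := fun n _ ↦ ‖LSeries.term f s n‖) (fun n ↦ ?_) (fun n ↦ .of_forall fun t ht ↦ ?_)
    (.of_forall fun t _ ↦ hs.norm) (by simp) (.of_forall fun t _ ↦ ?_)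
  · simp only [LSeries_term_add_mul_I]
    exact Continuous.aestronglyMeasurable (by fun_prop)
  · rw [Set.uIoc_of_le (by linarith)] at ht
    rw [norm_mul, norm_mul, norm_exp_mul_mul_I, norm_real, Real.norm_eq_abs, mul_one]
    refine (mul_le_of_le_one_left (norm_nonneg _)
      (abs_triangle_le_one (abs_le.2 ⟨ht.1.le, ht.2⟩))).trans_eq ?_
    rw [LSeries_term_add_mul_I, norm_mul, ← neg_mul, ← neg_mul, ← ofReal_neg, norm_exp_mul_mul_I,
      mul_one]
  · exact (hs.of_re_le_re (by simp)).hasSum.mul_left _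

theorem integral_triangle_mul_exp_div (hl : 0 < l) {z : ℂ} (hz : 0 < z.re) (y : ℝ) :
    ∫ t in (-l)..l, (triangle l t : ℂ) * cexp (t * y * I) * (1 / (z + t * I)) =
      ∫ u in Set.Ioi (0 : ℝ), cexp (-z * u) * fejerKernel l (y - u) := by
  have hlaplace (t : ℝ) : 1 / (z + t * I) = ∫ u in Set.Ioi (0 : ℝ), cexp (-(z + t * I) * u) := by
    rw [integral_exp_mul_complex_Ioi (by simpa using hz), ofReal_zero, mul_zero, Complex.exp_zero,
      neg_div_neg_eq]
  have hint : Integrable (Function.uncurry fun t u : ℝ ↦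
      (triangle l t : ℂ) * cexp (t * y * I) * cexp (-(z + t * I) * u))
      ((volume.restrict (Set.Ioc (-l) l)).prod (volume.restrict (Set.Ioi (0 : ℝ)))) := by
    have hfst : Integrable (fun t : ℝ ↦ (triangle l t : ℂ) * cexp (t * y * I))
        (volume.restrict (Set.Ioc (-l) l)) :=
      Continuous.integrableOn_Ioc (by fun_prop)
    have hsnd : Integrable (fun u : ℝ ↦ cexp (-z * u)) (volume.restrict (Set.Ioi (0 : ℝ))) :=
      integrableOn_exp_mul_complex_Ioi (by simpa using hz) 0
    refine ((hfst.mul_prod hsnd).bdd_mul (c := 1)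
      (f := fun p : ℝ × ℝ ↦ cexp ((-p.1 : ℝ) * p.2 * I))
      (Continuous.aestronglyMeasurable (by fun_prop))
      (.of_forall fun p ↦ (norm_exp_mul_mul_I _ _).le)).congr (.of_forall fun p ↦ ?_)
    simp only [Function.uncurry, ofReal_neg]
    rw [show -(z + p.1 * I) * p.2 = -z * p.2 + -p.1 * p.2 * I by ring, Complex.exp_add]
    ring
  rw [intervalIntegral.integral_of_le (by linarith)]
  simp_rw [hlaplace, ← integral_const_mul]
  rw [integral_integral_swap hint]
  refine integral_congr_ae (.of_forall fun u ↦ ?_)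
  simp only
  rw [← integral_triangle_mul_exp hl, intervalIntegral.integral_of_le (by linarith),
    ← integral_const_mul]
  congr 1 with t
  push_cast
  rw [show (t : ℂ) * (y - u) * I = t * y * I + -(t * u * I) by ring, Complex.exp_add,
    show -(z + t * I) * u = -z * u + -(t * u * I) by ring, Complex.exp_add]
  ring

theorem tendsto_integral_mul_exp_atTop (hl : 0 < l) (g : ℝ → ℂ) :
    Tendsto (fun y : ℝ ↦ ∫ t in (-l)..l, g t * cexp (t * y * I)) atTop (𝓝 0) := by
  have hfourier := Real.tendsto_integral_exp_smul_cocompact ((Set.Ioc (-l) l).indicator g)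
  have hfreq : Tendsto (fun y : ℝ ↦ -(y / (2 * Real.pi))) atTop (cocompact ℝ) :=
    (tendsto_neg_atTop_atBot.comp (tendsto_id.atTop_div_const (by positivity))).mono_right
      atBot_le_cocompact
  refine (hfourier.comp hfreq).congr fun y ↦ ?_
  rw [intervalIntegral.integral_of_le (by linarith), ← integral_indicator measurableSet_Ioc]
  simp only [Function.comp]
  congr 1 with t
  by_cases ht : t ∈ Set.Ioc (-l) l
  · simp only [Set.indicator_of_mem ht]
    rw [Circle.smul_def, Real.fourierChar_apply, smul_eq_mul, mul_comm]
    congr 2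
    push_cast
    field_simp
  · simp only [Set.indicator_of_notMem ht, smul_zero]

lemma tsum_term_mul_fejerKernel_sub_of_one_lt_re (hl : 0 < l) {f : ℕ → ℂ} {A : ℂ} {F : ℂ → ℂ}
    (hF : Set.EqOn F (fun s ↦ LSeries f s - A / (s - 1)) {s | 1 < s.re})
    (hFc : ContinuousOn F {s | 1 ≤ s.re}) {s : ℂ} (hs : 1 < s.re) (hfs : LSeriesSummable f s)
    (y : ℝ) :
    ∑' n : ℕ, LSeries.term f s n * fejerKernel l (y - Real.log n)
        - A * ∫ u in Set.Ioi (0 : ℝ), cexp (-(s - 1) * u) * fejerKernel l (y - u) =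
      ∫ t in (-l)..l, triangle l t * F (s + t * I) * cexp (t * y * I) := by
  have hz : 0 < (s - 1).re := by simpa using hs
  have hne (t : ℝ) : s - 1 + t * I ≠ 0 := fun h ↦
    hz.ne' (by simpa using congrArg Complex.re h)
  have hFline : Continuous fun t : ℝ ↦ F (s + t * I) :=
    hFc.comp_continuous (by fun_prop) fun t ↦ by simpa using hs.le
  have hpole : Continuous fun t : ℝ ↦ 1 / (s - 1 + t * I) :=
    continuous_const.div (by fun_prop) hne
  have hweight : Continuous fun t : ℝ ↦ (triangle l t : ℂ) * cexp (t * y * I) := by fun_prop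
  have hL (t : ℝ) : LSeries f (s + t * I) = F (s + t * I) + A * (1 / (s - 1 + t * I)) := by
    have := hF (x := s + t * I) (by simpa using hs)
    simp only [add_sub_right_comm s] at this
    rw [this]
    ring
  simp only [(hasSum_term_mul_fejerKernel hl hfs y).tsum_eq,
    ← integral_triangle_mul_exp_div hl hz y, hL]
  rw [← intervalIntegral.integral_const_mul]
  refine (intervalIntegral.integral_sub
    ((hweight.mul (hFline.add (hpole.const_mul A))).intervalIntegrable _ _)
    (((hweight.mul hpole).const_mul A).intervalIntegrable _ _)).symm.trans
    (intervalIntegral.integral_congr fun t _ ↦ ?_)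
  simp only [Pi.mul_apply, Pi.add_apply]
  ring

lemma tendsto_tsum_term_mul_fejerKernel {f : ℕ → ℂ} (hl : 0 < l) {y : ℝ}
    (hsum : Summable fun n : ℕ ↦ ‖LSeries.term f 1 n‖ * fejerKernel l (y - Real.log n)) :
    Tendsto (fun σ : ℝ ↦ ∑' n : ℕ, LSeries.term f σ n * fejerKernel l (y - Real.log n)) (𝓝[>] 1)
      (𝓝 (∑' n : ℕ, LSeries.term f 1 n * fejerKernel l (y - Real.log n))) := by
  refine tendsto_tsum_of_dominated_convergence hsum (fun n ↦ ?_) ?_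
  · have hterm : ContinuousAt (fun s : ℂ ↦ LSeries.term f s n) ((1 : ℝ) : ℂ) :=
      (LSeries.hasDerivAt_term f n _).continuousAt
    have := (hterm.comp continuous_ofReal.continuousAt).tendsto.mono_left
      (nhdsWithin_le_nhds (s := Set.Ioi 1))
    simpa using this.mul_const (fejerKernel l (y - Real.log n) : ℂ)
  · filter_upwards [self_mem_nhdsWithin] with σ hσ n
    rw [norm_mul, norm_real, Real.norm_of_nonneg (fejerKernel_nonneg hl _)]
    gcongr
    · exact fejerKernel_nonneg hl _
    · exact LSeries.norm_term_le_of_re_le_re f (by simpa using (Set.mem_Ioi.1 hσ).le) n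

lemma tendsto_integral_exp_mul_fejerKernel (hl : 0 < l) (y : ℝ) :
    Tendsto (fun σ : ℝ ↦ ∫ u in Set.Ioi (0 : ℝ), cexp (-((σ : ℂ) - 1) * u) * fejerKernel l (y - u))
      (𝓝[>] 1) (𝓝 (∫ u in Set.Ioi (0 : ℝ), (fejerKernel l (y - u) : ℂ))) := by
  refine tendsto_integral_filter_of_dominated_convergence (fun u ↦ fejerKernel l (y - u))
    (.of_forall fun σ ↦ Continuous.aestronglyMeasurable (by fun_prop)) ?_
    ((integrable_fejerKernel hl).comp_sub_left y).integrableOn (.of_forall fun u ↦ ?_)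
  · filter_upwards [self_mem_nhdsWithin] with σ hσ
    filter_upwards [ae_restrict_mem measurableSet_Ioi] with u hu
    rw [norm_mul, norm_real, Real.norm_of_nonneg (fejerKernel_nonneg hl _), Complex.norm_exp]
    refine mul_le_of_le_one_left (fejerKernel_nonneg hl _) (Real.exp_le_one_iff.2 ?_)
    suffices (1 - σ) * u ≤ 0 by simpa
    exact mul_nonpos_of_nonpos_of_nonneg (sub_nonpos.2 (Set.mem_Ioi.1 hσ).le) (Set.mem_Ioi.1 hu).le
  · have hcont : Continuous fun σ : ℝ ↦
        cexp (-((σ : ℂ) - 1) * u) * (fejerKernel l (y - u) : ℂ) := by fun_prop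
    simpa using (hcont.tendsto 1).mono_left nhdsWithin_le_nhds

lemma tendsto_integral_triangle_mul_boundary {F : ℂ → ℂ} (hFc : ContinuousOn F {s | 1 ≤ s.re})
    (y : ℝ) :
    Tendsto (fun σ : ℝ ↦ ∫ t in (-l)..l, triangle l t * F (σ + t * I) * cexp (t * y * I)) (𝓝[>] 1)
      (𝓝 (∫ t in (-l)..l, triangle l t * F (1 + t * I) * cexp (t * y * I))) := by
  have hF : Continuous fun p : ℝ × ℝ ↦ F ((max p.1 1 : ℝ) + p.2 * I) :=
    hFc.comp_continuous (by fun_prop) fun p ↦ by simp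
  have hintegrand : Continuous fun p : ℝ × ℝ ↦
      triangle l p.2 * F ((max p.1 1 : ℝ) + p.2 * I) * cexp (p.2 * y * I) :=
    (Continuous.mul (by fun_prop) hF).mul (by fun_prop)
  have hcont : Continuous fun σ : ℝ ↦
      ∫ t in (-l)..l, triangle l t * F ((max σ 1 : ℝ) + t * I) * cexp (t * y * I) :=
    intervalIntegral.continuous_parametric_intervalIntegral_of_continuous' hintegrand _ _
  have hlim := (hcont.tendsto 1).mono_left (nhdsWithin_le_nhds (s := Set.Ioi 1))
  rw [max_self, ofReal_one] at hlim
  refine hlim.congr' ?_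
  filter_upwards [self_mem_nhdsWithin] with σ hσ
  rw [max_eq_left (Set.mem_Ioi.1 hσ).le]

theorem tsum_term_one_mul_fejerKernel_sub (hl : 0 < l) {f : ℕ → ℂ} {A : ℂ} {F : ℂ → ℂ}
    (hF : Set.EqOn F (fun s ↦ LSeries f s - A / (s - 1)) {s | 1 < s.re})
    (hFc : ContinuousOn F {s | 1 ≤ s.re}) (hf : ∀ s : ℂ, 1 < s.re → LSeriesSummable f s) {y : ℝ}
    (hsum : Summable fun n : ℕ ↦ ‖LSeries.term f 1 n‖ * fejerKernel l (y - Real.log n)) :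
    ∑' n : ℕ, LSeries.term f 1 n * fejerKernel l (y - Real.log n)
        - A * ∫ u in Set.Ioi (0 : ℝ), (fejerKernel l (y - u) : ℂ) =
      ∫ t in (-l)..l, triangle l t * F (1 + t * I) * cexp (t * y * I) := by
  refine tendsto_nhds_unique ((tendsto_tsum_term_mul_fejerKernel hl hsum).sub
    ((tendsto_integral_exp_mul_fejerKernel hl y).const_mul A))
    ((tendsto_integral_triangle_mul_boundary hFc y).congr' ?_)
  filter_upwards [self_mem_nhdsWithin] with σ hσ
  have hσ' : 1 < (σ : ℂ).re := hσ
  exact (tsum_term_mul_fejerKernel_sub_of_one_lt_re hl hF hFc hσ' (hf σ hσ') y).symm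

lemma eight_div_pi_le_integral_fejerKernel (hl : 0 < l) {y : ℝ} (hy : Real.pi / l ≤ y) :
    8 / Real.pi ≤ ∫ u in Set.Ioi (0 : ℝ), fejerKernel l (y - u) := by
  have hpil : 0 < Real.pi / l := by positivity
  have hint : IntegrableOn (fun u ↦ fejerKernel l (y - u)) (Set.Ioi 0) :=
    ((integrable_fejerKernel hl).comp_sub_left y).integrableOn
  have hsub : Set.Ioc (y - Real.pi / l) (y + Real.pi / l) ⊆ Set.Ioi 0 := fun u hu ↦
    (sub_nonneg.2 hy).trans_lt hu.1
  calc 8 / Real.pi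
      = ∫ _ in Set.Ioc (y - Real.pi / l) (y + Real.pi / l), l * (2 / Real.pi) ^ 2 := by
        rw [setIntegral_const, Real.volume_real_Ioc_of_le (by linarith), smul_eq_mul]
        field_simp
        ring
    _ ≤ ∫ u in Set.Ioc (y - Real.pi / l) (y + Real.pi / l), fejerKernel l (y - u) :=
        setIntegral_mono_on (integrableOn_const (by simp)) (hint.mono_set hsub) measurableSet_Ioc
          fun u hu ↦ le_fejerKernel hl (abs_le.2 ⟨by linarith [hu.2], by linarith [hu.1]⟩)
    _ ≤ ∫ u in Set.Ioi (0 : ℝ), fejerKernel l (y - u) :=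
        setIntegral_mono_set hint (.of_forall fun u ↦ fejerKernel_nonneg hl _) hsub.eventuallyLE

end SmoothedSum

section ShortIntervals

open Filter Topology

variable {f : ℕ → ℝ} {A C : ℝ} {F : ℂ → ℂ} {l : ℝ}

lemma LSeries_term_one (f : ℕ → ℝ) (n : ℕ) :
    LSeries.term (fun n ↦ f n) 1 n = ((f n / n : ℝ) : ℂ) := by
  rcases eq_or_ne n 0 with rfl | hn
  · simp
  · rw [LSeries.term_of_ne_zero hn, Complex.cpow_one, Complex.ofReal_div, Complex.ofReal_natCast]

lemma summable_div_mul_fejerKernel (hf : ∀ n, 0 ≤ f n)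
    (hC : ∀ n : ℕ, ∑ k ∈ Finset.Ioc 0 n, f k ≤ C * n) (hl : 0 < l) (y : ℝ) :
    Summable fun n : ℕ ↦ f n / n * fejerKernel l (y - Real.log n) := by
  obtain ⟨B, hB⟩ := exists_sum_div_div_one_add_sq_le hf hC
  have hfn (n : ℕ) : 0 ≤ f n / n := div_nonneg (hf n) n.cast_nonneg
  have hmajorant : Summable fun n : ℕ ↦ f n / n / (1 + (y - Real.log n) ^ 2) :=
    summable_of_sum_le (fun n ↦ div_nonneg (hfn n) (by positivity)) (hB y)
  refine (hmajorant.mul_left (l + 4 / l)).of_nonneg_of_le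
    (fun n ↦ mul_nonneg (hfn n) (fejerKernel_nonneg hl _)) fun n ↦ ?_
  rw [mul_div_left_comm]
  exact mul_le_mul_of_nonneg_left (fejerKernel_le_div_one_add_sq hl _) (hfn n)

theorem eventually_le_tsum_div_mul_fejerKernel (hf : ∀ n, 0 ≤ f n)
    (hC : ∀ n : ℕ, ∑ k ∈ Finset.Ioc 0 n, f k ≤ C * n) (hA : 0 < A)
    (hF : Set.EqOn F (fun s ↦ LSeries (fun n ↦ f n) s - A / (s - 1)) {s | 1 < s.re})
    (hFc : ContinuousOn F {s | 1 ≤ s.re}) (hl : 0 < l) :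
    ∀ᶠ y in atTop, 2 * A ≤ ∑' n : ℕ, f n / n * fejerKernel l (y - Real.log n) := by
  have hsmooth (y : ℝ) :
      (∫ t in (-l)..l, triangle l t * F (1 + t * Complex.I) * Complex.exp (t * y * Complex.I)).re =
        ∑' n : ℕ, f n / n * fejerKernel l (y - Real.log n)
          - A * ∫ u in Set.Ioi (0 : ℝ), fejerKernel l (y - u) := by
    rw [← tsum_term_one_mul_fejerKernel_sub hl hF hFc fun s ↦ LSeriesSummable_of_sum_le hf hC]
    · simp only [LSeries_term_one, integral_complex_ofReal, ← Complex.ofReal_mul,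
        ← Complex.ofReal_tsum, ← Complex.ofReal_sub, Complex.ofReal_re]
    · refine (summable_div_mul_fejerKernel hf hC hl y).congr fun n ↦ ?_
      rw [LSeries_term_one, Complex.norm_real,
        Real.norm_of_nonneg (div_nonneg (hf n) n.cast_nonneg)]
  have hRL := (Complex.continuous_re.tendsto 0).comp (tendsto_integral_mul_exp_atTop hl
    fun t : ℝ ↦ triangle l t * F (1 + t * Complex.I))
  have hpi : 2 < 8 / Real.pi := by
    rw [lt_div_iff₀ Real.pi_pos]
    linarith [Real.pi_lt_four]
  filter_upwards [hRL.eventually_const_lt (u := -((8 / Real.pi - 2) * A))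
    (by rw [Complex.zero_re]; nlinarith), eventually_ge_atTop (Real.pi / l)] with y hy hyl
  rw [Function.comp, hsmooth y] at hy
  linarith [mul_le_mul_of_nonneg_left (eight_div_pi_le_integral_fejerKernel hl hyl) hA.le]

lemma half_log_le_abs_of_notMem_Icc {ε x : ℝ} (hε : 0 < ε) (hx : 0 < x) {n : ℕ} (hn : n ≠ 0)
    (hnx : n ∉ Finset.Icc ⌈x⌉₊ ⌊(1 + ε) * x⌋₊) :
    Real.log (1 + ε) / 2 ≤ |Real.log x + Real.log (1 + ε) / 2 - Real.log n| := by
  have hn0 : (0 : ℝ) < n := by positivity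
  have hlog : Real.log ((1 + ε) * x) = Real.log (1 + ε) + Real.log x :=
    Real.log_mul (by positivity) hx.ne'
  rw [Finset.mem_Icc, Nat.ceil_le, Nat.le_floor_iff (by positivity), not_and_or, not_le,
    not_le] at hnx
  rcases hnx with hnx | hnx
  · exact le_abs.2 (.inl (by linarith [Real.log_lt_log hn0 hnx]))
  · exact le_abs.2 (.inr (by linarith [Real.log_lt_log (by positivity) hnx]))

lemma tsum_div_mul_fejerKernel_le {B : ℝ} (hf : ∀ n, 0 ≤ f n)
    (hB : ∀ (y : ℝ) (s : Finset ℕ), ∑ n ∈ s, f n / n / (1 + (y - Real.log n) ^ 2) ≤ B)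
    (hl : 0 < l) {ε x : ℝ} (hε : 0 < ε) (hx : 0 < x) :
    ∑' n : ℕ, f n / n * fejerKernel l (Real.log x + Real.log (1 + ε) / 2 - Real.log n) ≤
      l / x * ∑ n ∈ Finset.Icc ⌈x⌉₊ ⌊(1 + ε) * x⌋₊, f n +
        4 / l * (1 + 1 / (Real.log (1 + ε) / 2) ^ 2) * B := by
  set δ := Real.log (1 + ε) / 2
  set W := Finset.Icc ⌈x⌉₊ ⌊(1 + ε) * x⌋₊
  have hδ : 0 < δ := half_pos (Real.log_pos (by linarith))
  have hfn (n : ℕ) : 0 ≤ f n / n := div_nonneg (hf n) n.cast_nonneg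
  have hterm (n : ℕ) (y : ℝ) : 0 ≤ f n / n * fejerKernel l y :=
    mul_nonneg (hfn n) (fejerKernel_nonneg hl y)
  have hinside {n : ℕ} (hn : n ∈ W) (y : ℝ) : f n / n * fejerKernel l y ≤ l / x * f n := by
    have hxn : x ≤ n := Nat.ceil_le.1 (Finset.mem_Icc.1 hn).1
    calc f n / n * fejerKernel l y ≤ f n / x * l := by
          gcongr
          exacts [fejerKernel_nonneg hl y, div_nonneg (hf n) hx.le, hf n, fejerKernel_le hl y]
      _ = l / x * f n := by ring
  have houtside {n : ℕ} (hn : n ∉ W) :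
      f n / n * fejerKernel l (Real.log x + δ - Real.log n) ≤
        4 / l * (1 + 1 / δ ^ 2) * (f n / n / (1 + (Real.log x + δ - Real.log n) ^ 2)) := by
    rcases eq_or_ne n 0 with rfl | hn0
    · simp
    rw [mul_div_left_comm]
    exact mul_le_mul_of_nonneg_left (fejerKernel_le_div_one_add_sq_of_le_abs hl hδ
      (half_log_le_abs_of_notMem_Icc hε hx hn0 hn)) (hfn n)
  refine Real.tsum_le_of_sum_le (fun n ↦ hterm n _) fun s ↦ ?_
  rw [← Finset.sum_filter_add_sum_filter_not s (· ∈ W), Finset.mul_sum]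
  refine add_le_add ?_ ?_
  · refine (Finset.sum_le_sum fun n hn ↦ hinside (Finset.mem_filter.1 hn).2 _).trans
      (Finset.sum_le_sum_of_subset_of_nonneg (fun n hn ↦ (Finset.mem_filter.1 hn).2)
        fun n _ _ ↦ mul_nonneg (by positivity) (hf n))
  · refine (Finset.sum_le_sum fun n hn ↦ houtside (Finset.mem_filter.1 hn).2).trans ?_
    rw [← Finset.mul_sum]
    gcongr
    exact hB _ _

theorem exists_eventually_mul_le_sum_Icc (hf : ∀ n, 0 ≤ f n)
    (hC : ∀ n : ℕ, ∑ k ∈ Finset.Ioc 0 n, f k ≤ C * n) (hA : 0 < A)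
    (hF : Set.EqOn F (fun s ↦ LSeries (fun n ↦ f n) s - A / (s - 1)) {s | 1 < s.re})
    (hFc : ContinuousOn F {s | 1 ≤ s.re}) {ε : ℝ} (hε : 0 < ε) :
    ∃ c > 0, ∀ᶠ x : ℝ in atTop, c * x ≤ ∑ n ∈ Finset.Icc ⌈x⌉₊ ⌊(1 + ε) * x⌋₊, f n := by
  obtain ⟨B, hB⟩ := exists_sum_div_div_one_add_sq_le hf hC
  set δ := Real.log (1 + ε) / 2
  obtain ⟨l, hl, hlB⟩ : ∃ l > 0, 4 / l * (1 + 1 / δ ^ 2) * B ≤ A := by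
    have hlim : Tendsto (fun l : ℝ ↦ 4 / l * (1 + 1 / δ ^ 2) * B) atTop (𝓝 0) := by
      simpa using ((tendsto_const_nhds.div_atTop tendsto_id).mul_const _).mul_const B
    exact ((eventually_gt_atTop 0).and (hlim.eventually_le_const hA)).exists
  refine ⟨A / l, by positivity, ?_⟩
  have hshift : Tendsto (fun x ↦ Real.log x + δ) atTop atTop :=
    tendsto_atTop_add_const_right _ _ Real.tendsto_log_atTop
  filter_upwards [hshift.eventually (eventually_le_tsum_div_mul_fejerKernel hf hC hA hF hFc hl),
    eventually_gt_atTop 0] with x hxA hx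
  have hA' : A ≤ l / x * ∑ n ∈ Finset.Icc ⌈x⌉₊ ⌊(1 + ε) * x⌋₊, f n := by
    linarith [tsum_div_mul_fejerKernel_le hf hB hl hε hx]
  rw [div_mul_eq_mul_div] at hA'
  rwa [div_mul_eq_mul_div, div_le_iff₀' hl, ← le_div_iff₀ hx]

end ShortIntervals

section Primes

open ArithmeticFunction Filter Topology

lemma sum_vonMangoldt_le (n : ℕ) : ∑ k ∈ Finset.Ioc 0 n, Λ k ≤ (Real.log 4 + 4) * n := by
  simpa [Chebyshev.psi] using Chebyshev.psi_le_const_mul_self n.cast_nonneg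

lemma exists_continuousOn_eqOn_LSeries_vonMangoldt_sub : ∃ F : ℂ → ℂ,
    Set.EqOn F (fun s ↦ LSeries (fun n ↦ Λ n) s - (1 : ℝ) / (s - 1)) {s | 1 < s.re} ∧
      ContinuousOn F {s | 1 ≤ s.re} := by
  refine ⟨vonMangoldt.LFunctionResidueClassAux (q := 1) 1, ?_,
    vonMangoldt.continuousOn_LFunctionResidueClassAux 1⟩
  have hclass : vonMangoldt.residueClass (1 : ZMod 1) = fun n ↦ Λ n := by
    ext n
    simp [vonMangoldt.residueClass, Subsingleton.elim (n : ZMod 1) 1]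
  simpa [hclass] using vonMangoldt.eqOn_LFunctionResidueClassAux (q := 1) isUnit_one

lemma exists_sum_vonMangoldt_not_prime_le : ∃ C : ℝ, ∀ (a : ℕ) (x : ℝ),
    ∑ n ∈ Finset.Icc a ⌊x⌋₊ with ¬ n.Prime, Λ n ≤ C * √x := by
  obtain ⟨C, hC⟩ := Chebyshev.psi_sub_theta_le_mul_sqrt
  refine ⟨C, fun a x ↦ le_trans ?_ (hC x)⟩
  rw [Chebyshev.psi_sub_theta_eq_sum_not_prime, ← Finset.sum_filter_ne_zero]
  refine Finset.sum_le_sum_of_subset_of_nonneg (fun n hn ↦ ?_) fun n _ _ ↦ vonMangoldt_nonneg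
  simp only [Finset.mem_filter, Finset.mem_Icc, Finset.mem_Ioc] at hn ⊢
  exact ⟨⟨Nat.pos_of_ne_zero fun h ↦ hn.2 (by simp [h]), hn.1.1.2⟩, hn.1.2⟩

theorem eventually_exists_prime_mem_Icc {ε : ℝ} (hε : 0 < ε) :
    ∀ᶠ x : ℝ in atTop, ∃ p : ℕ, p.Prime ∧ x ≤ p ∧ p ≤ (1 + ε) * x := by
  obtain ⟨F, hF, hFc⟩ := exists_continuousOn_eqOn_LSeries_vonMangoldt_sub
  obtain ⟨c, hc, hcsum⟩ := exists_eventually_mul_le_sum_Icc (fun n ↦ vonMangoldt_nonneg)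
    sum_vonMangoldt_le one_pos hF hFc hε
  obtain ⟨C, hC⟩ := exists_sum_vonMangoldt_not_prime_le
  have hsqrt : Tendsto (fun x ↦ c * √x) atTop atTop :=
    Real.tendsto_sqrt_atTop.const_mul_atTop hc
  filter_upwards [hcsum, hsqrt.eventually_gt_atTop (C * √(1 + ε)), eventually_gt_atTop 0]
    with x hxc hxC hx
  by_contra! hno
  refine (hxc.trans ?_).not_gt (?_ : C * √((1 + ε) * x) < c * x)
  · rw [← Finset.filter_true_of_mem (p := fun n ↦ ¬ n.Prime) (s := Finset.Icc _ _)]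
    · exact hC _ _
    · intro n hn hp
      obtain ⟨hle, hge⟩ := Finset.mem_Icc.1 hn
      exact (hno n hp (Nat.ceil_le.1 hle)).not_ge ((Nat.le_floor_iff (by positivity)).1 hge)
  · calc C * √((1 + ε) * x) = C * √(1 + ε) * √x := by rw [Real.sqrt_mul (by positivity)]; ring
      _ < c * √x * √x := by gcongr
      _ = c * x := by rw [mul_assoc, Real.mul_self_sqrt hx.le]

end Primes

section BergeCycles

open Finset

variable {V : Type*}

/-- The set system `E` contains a Berge cycle of length `ℓ`: distinct vertices `v i` and distinct
edges `e i` with `v i, v (i + 1) ∈ e i`, the indices being taken modulo `ℓ`. -/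
def HasBergeCycle (ℓ : ℕ) (E : Finset (Finset V)) : Prop :=
  ∃ (v : ZMod ℓ → V) (e : ZMod ℓ → Finset V), Function.Injective v ∧ Function.Injective e ∧
    ∀ i, e i ∈ E ∧ v i ∈ e i ∧ v (i + 1) ∈ e i

lemma IsUniform.exists_bergeCycles_hypContains_iff {m ℓ N : ℕ} [NeZero ℓ]
    {E : Finset (Finset (Fin N))} (hE : IsUniform m E) :
    (∃ H ∈ bergeCycles m ℓ, HypContains H.2 E) ↔ HasBergeCycle ℓ E := by
  constructor
  · rintro ⟨H, ⟨-, v, e, hv, he, heH, -, hve⟩, f, hf, hfE⟩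
    refine ⟨f ∘ v, fun i ↦ (e i).image f, hf.comp hv, (image_injective hf).comp he, fun i ↦
      ⟨hfE _ (heH i), mem_image_of_mem f (hve i ?_), mem_image_of_mem f (hve i ?_)⟩⟩ <;> simp
  · rintro ⟨v, e, hv, he, hve⟩
    refine ⟨⟨N, univ.image e⟩, ⟨?_, v, e, hv, he, fun i ↦ mem_image_of_mem e (mem_univ i), ?_, ?_⟩,
      id, Function.injective_id, ?_⟩
    · simpa [IsUniform] using fun i ↦ hE _ (hve i).1
    · simp
    · simpa [insert_subset_iff] using fun i ↦ (hve i).2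
    · simpa using fun i ↦ (hve i).1

lemma IsUniform.forall_bergeCycles_not_hypContains_iff {m N : ℕ} {E : Finset (Finset (Fin N))}
    (hE : IsUniform m E) :
    (∀ H ∈ bergeCycles m 2 ∪ bergeCycles m 3 ∪ bergeCycles m 4, ¬ HypContains H.2 E) ↔
      ¬ HasBergeCycle 2 E ∧ ¬ HasBergeCycle 3 E ∧ ¬ HasBergeCycle 4 E := by
  simp only [← hE.exists_bergeCycles_hypContains_iff, Set.mem_union, or_imp, forall_and, not_exists,
    not_and, and_assoc]

lemma eq_of_not_hasBergeCycle_two {E : Finset (Finset V)} (h₂ : ¬ HasBergeCycle 2 E)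
    {e f : Finset V} (he : e ∈ E) (hf : f ∈ E) {x y : V} (hxy : x ≠ y)
    (hxe : x ∈ e) (hye : y ∈ e) (hxf : x ∈ f) (hyf : y ∈ f) : e = f := by
  by_contra hef
  refine h₂ ⟨![x, y], ![e, f], injective_pair_iff_ne.2 hxy, injective_pair_iff_ne.2 hef, fun i ↦ ?_⟩
  fin_cases i
  exacts [⟨he, hxe, hye⟩, ⟨hf, hyf, hxf⟩]

lemma injective_vec_three {α : Type*} {a b c : α} (hab : a ≠ b) (hbc : b ≠ c) (hca : c ≠ a) :
    Function.Injective ![a, b, c] :=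
  Fin.cons_injective_iff.2 ⟨by simp [hab, hca.symm], injective_pair_iff_ne.2 hbc⟩

lemma eq_of_not_hasBergeCycle_three {E : Finset (Finset V)} (h₂ : ¬ HasBergeCycle 2 E)
    (h₃ : ¬ HasBergeCycle 3 E) {e f g : Finset V} (he : e ∈ E) (hf : f ∈ E) (hg : g ∈ E)
    {x y z : V} (hxy : x ≠ y) (hyz : y ≠ z) (hzx : z ≠ x)
    (hxe : x ∈ e) (hye : y ∈ e) (hyf : y ∈ f) (hzf : z ∈ f) (hzg : z ∈ g) (hxg : x ∈ g) :
    e = f := by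
  by_contra hef
  have hfg : f ≠ g := by
    rintro rfl
    exact hef (eq_of_not_hasBergeCycle_two h₂ he hf hxy hxe hye hxg hyf)
  have hge : g ≠ e := by
    rintro rfl
    exact hef (eq_of_not_hasBergeCycle_two h₂ he hf hyz hye hzg hyf hzf)
  refine h₃ ⟨![x, y, z], ![e, f, g], injective_vec_three hxy hyz hzx,
    injective_vec_three hef hfg hge, fun i ↦ ?_⟩
  fin_cases i
  exacts [⟨he, hxe, hye⟩, ⟨hf, hyf, hzf⟩, ⟨hg, hzg, hxg⟩]

end BergeCycles

section FourCycleFree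

open Finset

variable {V W : Type*} {G : SimpleGraph V}

/-- A graph without 4-cycles: two distinct vertices have at most one common neighbour. -/
def IsC4Free (G : SimpleGraph V) : Prop :=
  ∀ ⦃x y⦄, x ≠ y → (G.commonNeighbors x y).Subsingleton

lemma IsC4Free.comap (hG : IsC4Free G) {f : W → V} (hf : Function.Injective f) :
    IsC4Free (G.comap f) :=
  fun _ _ hxy _ hz _ hw ↦ hf (hG (hf.ne hxy) hz hw)

variable [Fintype V]

lemma IsC4Free.sum_offDiag_neighborFinset_le [DecidableRel G.Adj] (hG : IsC4Free G) :
    ∑ v, #(G.neighborFinset v).offDiag ≤ Fintype.card V ^ 2 := by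
  classical
  rw [← card_biUnion]
  · exact (card_le_univ _).trans_eq (by rw [Fintype.card_prod, sq])
  · intro v _ w _ hvw
    refine disjoint_left.2 fun ⟨x, y⟩ hv hw ↦ hvw ?_
    simp only [mem_offDiag, SimpleGraph.mem_neighborFinset] at hv hw
    exact hG hv.2.2 ⟨hv.1.symm, hv.2.1.symm⟩ ⟨hw.1.symm, hw.2.1.symm⟩

lemma IsC4Free.sq_two_mul_card_edgeFinset_le [DecidableRel G.Adj] (hG : IsC4Free G) :
    (2 * #G.edgeFinset) ^ 2 ≤ Fintype.card V * (Fintype.card V ^ 2 + 2 * #G.edgeFinset) := by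
  classical
  calc (2 * #G.edgeFinset) ^ 2 = (∑ v, G.degree v) ^ 2 := by rw [G.sum_degrees_eq_twice_card_edges]
    _ ≤ Fintype.card V * ∑ v, G.degree v ^ 2 := sq_sum_le_card_mul_sum_sq
    _ = Fintype.card V * (∑ v, #(G.neighborFinset v).offDiag + 2 * #G.edgeFinset) := by
      simp only [← G.sum_degrees_eq_twice_card_edges, ← sum_add_distrib, offDiag_card,
        SimpleGraph.card_neighborFinset_eq_degree, sq, Nat.sub_add_cancel (Nat.le_mul_self _)]
    _ ≤ _ := by gcongr; exact hG.sum_offDiag_neighborFinset_le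

lemma IsC4Free.two_mul_card_edgeFinset_le [DecidableRel G.Adj] (hG : IsC4Free G) :
    2 * (#G.edgeFinset : ℝ) ≤ Fintype.card V * (1 + √(Fintype.card V)) := by
  have hsq : (2 * (#G.edgeFinset : ℝ)) ^ 2 ≤
      Fintype.card V * ((Fintype.card V : ℝ) ^ 2 + 2 * #G.edgeFinset) := by
    exact_mod_cast hG.sq_two_mul_card_edgeFinset_le
  have hs := Real.sq_sqrt (Nat.cast_nonneg (α := ℝ) (Fintype.card V))
  set s := √(Fintype.card V : ℝ)
  rw [← hs] at hsq ⊢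
  have hs0 : 0 ≤ s := Real.sqrt_nonneg _
  by_contra! hlt
  nlinarith [mul_nonneg (pow_nonneg hs0 2) (sub_nonneg.2 hlt.le), pow_nonneg hs0 5,
    mul_nonneg (pow_nonneg hs0 3) (sub_nonneg.2 hlt.le), pow_pos (sub_pos.2 hlt) 2]

end FourCycleFree

section Shadow

open Finset

variable {V : Type*} {E : Finset (Finset V)}

/-- The shadow graph of a hypergraph: distinct vertices are adjacent when an edge contains both. -/
def shadowGraph (E : Finset (Finset V)) : SimpleGraph V where
  Adj x y := x ≠ y ∧ ∃ e ∈ E, x ∈ e ∧ y ∈ e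
  symm := ⟨fun _ _ ⟨hxy, e, he, hx, hy⟩ ↦ ⟨hxy.symm, e, he, hy, hx⟩⟩
  loopless := ⟨fun _ h ↦ h.1 rfl⟩

lemma hasBergeCycle_four_of_closedWalk (hE : ∀ e ∈ E, #e = 3) (h₂ : ¬ HasBergeCycle 2 E)
    (h₃ : ¬ HasBergeCycle 3 E) {v : ZMod 4 → V} {e : ZMod 4 → Finset V}
    (hv : Function.Injective v) (hve : ∀ i, e i ∈ E ∧ v i ∈ e i ∧ v (i + 1) ∈ e i) :
    HasBergeCycle 4 E := by
  have cover : ∀ i j : ZMod 4, j = i ∨ j = i + 1 ∨ j = i + 2 ∨ j = i + 3 := by decide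
  have hne : ∀ i : ZMod 4, i ≠ i + 2 ∧ i + 2 ≠ i + 3 ∧ i + 3 ≠ i := by decide
  have next {i j : ZMod 4} (hij : j = i + 1) : v j ∈ e i := hij ▸ (hve i).2.2
  have cycle : ∀ i : ZMod 4, i = i + 3 + 1 := by decide
  have notMem_of_mem (i) (hi₂ : v (i + 2) ∈ e i) : v (i + 3) ∉ e i := by
    intro hi₃
    have hmem (j) : v j ∈ e i := by
      rcases cover i j with rfl | rfl | rfl | rfl
      exacts [(hve _).2.1, (hve _).2.2, hi₂, hi₃]
    have hcard := card_le_card_of_injOn v (s := univ) (fun j _ ↦ hmem j) hv.injOn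
    rw [hE _ (hve i).1, card_univ, ZMod.card] at hcard
    omega
  have ne_succ (i) : e i ≠ e (i + 1) := by
    intro h
    have hi₂ : v (i + 2) ∈ e i := h ▸ next (by ring)
    have hi₃ : v (i + 3) ∈ e (i + 2) := next (by ring)
    have h_eq : e i = e (i + 2) := eq_of_not_hasBergeCycle_three h₂ h₃ (hve i).1 (hve (i + 2)).1
      (hve (i + 3)).1 (hv.ne (hne i).1) (hv.ne (hne i).2.1) (hv.ne (hne i).2.2)
      (hve i).2.1 hi₂ (hve _).2.1 hi₃ (hve _).2.1 (next (cycle i))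
    exact notMem_of_mem i hi₂ (h_eq ▸ hi₃)
  refine ⟨v, e, hv, fun i j h ↦ ?_, hve⟩
  rcases cover i j with rfl | rfl | rfl | rfl
  · rfl
  · exact (ne_succ i h).elim
  · exact (notMem_of_mem i (h ▸ (hve _).2.1) (h ▸ next (by ring))).elim
  · exact (ne_succ (i + 3) (cycle i ▸ h.symm)).elim

lemma isC4Free_shadowGraph (hE : ∀ e ∈ E, #e = 3) (h₂ : ¬ HasBergeCycle 2 E)
    (h₃ : ¬ HasBergeCycle 3 E) (h₄ : ¬ HasBergeCycle 4 E) : IsC4Free (shadowGraph E) := by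
  rintro x z hxz y ⟨⟨hxy, e, he, hxe, hye⟩, hzy, f, hf, hzf, hyf⟩ w
    ⟨⟨hxw, k, hk, hxk, hwk⟩, hzw, g, hg, hzg, hwg⟩
  by_contra hyw
  have hv : Function.Injective ![x, y, z, w] :=
    Fin.cons_injective_iff.2 ⟨by simp [hxy, hxz, hxw],
      injective_vec_three hzy.symm hzw (Ne.symm hyw)⟩
  refine h₄ (hasBergeCycle_four_of_closedWalk hE h₂ h₃ (e := ![e, f, g, k]) hv fun i ↦ ?_)
  fin_cases i
  exacts [⟨he, hxe, hye⟩, ⟨hf, hyf, hzf⟩, ⟨hg, hzg, hwg⟩, ⟨hk, hwk, hxk⟩]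

lemma mk_mem_image_offDiag [DecidableEq V] {e : Finset V} {x y : V} :
    s(x, y) ∈ e.offDiag.image Sym2.mk.uncurry ↔ x ∈ e ∧ y ∈ e ∧ x ≠ y := by
  simp only [mem_image, mem_offDiag, Prod.exists, Function.uncurry_apply_pair, Sym2.eq_iff]
  grind

lemma card_edgeFinset_shadowGraph {m : ℕ} [Fintype (shadowGraph E).edgeSet]
    (hE : ∀ e ∈ E, #e = m) (h₂ : ¬ HasBergeCycle 2 E) :
    #(shadowGraph E).edgeFinset = #E * m.choose 2 := by
  classical
  have h_eq : (shadowGraph E).edgeFinset = E.biUnion fun e ↦ e.offDiag.image Sym2.mk.uncurry := by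
    ext ⟨x, y⟩
    rw [SimpleGraph.mem_edgeFinset]
    simp only [mem_biUnion, mk_mem_image_offDiag]
    exact ⟨fun ⟨hxy, e, he, hx, hy⟩ ↦ ⟨e, he, hx, hy, hxy⟩,
      fun ⟨e, he, hx, hy, hxy⟩ ↦ ⟨hxy, e, he, hx, hy⟩⟩
  rw [h_eq, card_biUnion, sum_congr rfl fun e he ↦ ?_, sum_const, smul_eq_mul]
  · rw [Sym2.card_image_offDiag, hE e he]
  · refine fun e he f hf hef ↦ disjoint_left.2 (Sym2.ind fun x y hxe hxf ↦ hef ?_)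
    rw [mk_mem_image_offDiag] at hxe hxf
    exact eq_of_not_hasBergeCycle_two h₂ he hf hxe.2.2 hxe.1 hxe.2.1 hxf.1 hxf.2.1

end Shadow

section RKHypergraph

open Finset

variable {m r k N : ℕ} {E : Finset (Finset (Fin N))}

lemma IsUniform.isRKHyper_iff (hE : IsUniform m E) :
    IsRKHyper E m r k ↔ ∃ c : Fin N → Fin r, (∀ i, #{v | c v = i} ≤ k) ∧
      ∀ S : Finset (Fin r), #S = m → ∃ e ∈ E, e.image c = S := by
  constructor
  · rintro ⟨P, hP, hPk, hPE⟩
    choose c hc hc_unique using hP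
    refine ⟨c, fun i ↦ (card_le_card ?_).trans (hPk i), fun S hS ↦ ?_⟩
    · intro v hv
      exact (mem_filter.1 hv).2 ▸ hc v
    · obtain ⟨e, he, heS⟩ := hPE S hS
      refine ⟨e, he, (eq_of_subset_of_card_le (fun i hi ↦ ?_) ?_).symm⟩
      · obtain ⟨v, hv⟩ := card_pos.1 (heS i hi ▸ one_pos)
        rw [mem_inter] at hv
        exact mem_image.2 ⟨v, hv.1, (hc_unique v i hv.2).symm⟩
      · exact card_image_le.trans_eq ((hE e he).trans hS.symm)
  · rintro ⟨c, hck, hcE⟩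
    refine ⟨fun i ↦ {v | c v = i}, fun v ↦ ⟨c v, by simp, by simp [eq_comm]⟩, hck, fun S hS ↦ ?_⟩
    obtain ⟨e, he, rfl⟩ := hcE S hS
    have hc : Set.InjOn c e := card_image_iff.1 (hS.trans (hE e he).symm)
    refine ⟨e, he, fun i hi ↦ ?_⟩
    obtain ⟨v, hv, rfl⟩ := mem_image.1 hi
    refine card_eq_one.2 ⟨v, ?_⟩
    ext w
    simp only [mem_inter, mem_filter_univ, mem_singleton]
    exact ⟨fun hw ↦ hc hw.1 hv hw.2, by rintro rfl; exact ⟨hv, rfl⟩⟩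

lemma IsRKHyper.card_vertices_le (h : IsRKHyper E m r k) : N ≤ r * k := by
  obtain ⟨P, hP, hPk, -⟩ := h
  have hcover : univ ⊆ univ.biUnion P := fun v _ ↦ by simpa using (hP v).exists
  calc N = #(univ : Finset (Fin N)) := (card_fin N).symm
    _ ≤ #(univ.biUnion P) := card_le_card hcover
    _ ≤ r * k := by simpa using card_biUnion_le_card_mul univ P k fun i _ ↦ hPk i

lemma IsUniform.choose_le_card (hE : IsUniform m E) (h : IsRKHyper E m r k) :
    r.choose m ≤ #E := by
  obtain ⟨c, -, hcE⟩ := hE.isRKHyper_iff.1 h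
  have hsub : powersetCard m (univ : Finset (Fin r)) ⊆ E.image (image c) := fun S hS ↦
    mem_image.2 (hcE S (mem_powersetCard.1 hS).2)
  simpa using (card_le_card hsub).trans card_image_le

lemma IsRKHyper.le_add_three (hE : IsUniform 3 E) (h₂ : ¬ HasBergeCycle 2 E)
    (h₃ : ¬ HasBergeCycle 3 E) (h₄ : ¬ HasBergeCycle 4 E) (h : IsRKHyper E 3 r k) :
    r ≤ k + 3 := by
  classical
  by_contra! hkr
  have hN : (N : ℝ) ≤ r * k := by exact_mod_cast h.card_vertices_le
  have hchoose : (r : ℝ) * (r - 1) * (r - 2) ≤ 6 * #E := by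
    have : (r.choose 3 : ℝ) ≤ #E := by exact_mod_cast hE.choose_le_card h
    rw [Nat.cast_choose_eq_descPochhammer_div, div_le_iff₀ (by positivity)] at this
    simpa [descPochhammer_succ_right, Nat.factorial, mul_comm] using this
  have hedges : 6 * (#E : ℝ) ≤ N * (1 + √N) := by
    have := (isC4Free_shadowGraph hE h₂ h₃ h₄).two_mul_card_edgeFinset_le
    rw [card_edgeFinset_shadowGraph hE h₂, Fintype.card_fin, Nat.choose_two_right] at this
    push_cast at this
    linarith
  have hk : (k : ℝ) + 4 ≤ r := by exact_mod_cast hkr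
  have hsqrt : √N ≤ r := Real.sqrt_le_iff.2 ⟨by positivity, by nlinarith⟩
  have : (r : ℝ) * ((r - 1) * (r - 2)) ≤ r * (k * (1 + r)) := by
    calc (r : ℝ) * ((r - 1) * (r - 2)) = r * (r - 1) * (r - 2) := by ring
      _ ≤ N * (1 + √N) := hchoose.trans hedges
      _ ≤ r * k * (1 + r) := by gcongr
      _ = r * (k * (1 + r)) := by ring
  nlinarith [le_of_mul_le_mul_left this (by linarith [k.cast_nonneg (α := ℝ)])]

end RKHypergraph

section Cliques

open Finset

variable {V : Type*} [Fintype V] [DecidableEq V] {G : SimpleGraph V} [DecidableRel G.Adj]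

lemma adj_of_mem_cliqueFinset {n : ℕ} {e : Finset V} (he : e ∈ G.cliqueFinset n) {x y : V}
    (hx : x ∈ e) (hy : y ∈ e) (hxy : x ≠ y) : G.Adj x y :=
  (SimpleGraph.mem_cliqueFinset_iff.1 he).isClique hx hy hxy

namespace IsC4Free

lemma mem_of_adj (hG : IsC4Free G) {e : Finset V} (he : e ∈ G.cliqueFinset 3) {x y z : V}
    (hx : x ∈ e) (hy : y ∈ e) (hxy : x ≠ y) (hxz : G.Adj x z) (hyz : G.Adj y z) : z ∈ e := by
  obtain ⟨w, hw, hwxy⟩ : ∃ w ∈ e, w ∉ ({x, y} : Finset V) := by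
    refine exists_mem_notMem_of_card_lt_card (card_le_two.trans_lt ?_)
    rw [(SimpleGraph.mem_cliqueFinset_iff.1 he).card_eq]
    norm_num
  simp only [mem_insert, mem_singleton, not_or] at hwxy
  have hxw := adj_of_mem_cliqueFinset he hx hw (Ne.symm hwxy.1)
  have hyw := adj_of_mem_cliqueFinset he hy hw (Ne.symm hwxy.2)
  rwa [hG hxy ⟨hxz, hyz⟩ ⟨hxw, hyw⟩]

lemma eq_of_mem_cliqueFinset (hG : IsC4Free G) {e f : Finset V} (he : e ∈ G.cliqueFinset 3)
    (hf : f ∈ G.cliqueFinset 3) {x y : V} (hxy : x ≠ y) (hxe : x ∈ e) (hye : y ∈ e)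
    (hxf : x ∈ f) (hyf : y ∈ f) : e = f := by
  refine eq_of_subset_of_card_le (fun z hz ↦ ?_) ?_
  · rcases eq_or_ne x z with rfl | hxz
    · exact hxf
    rcases eq_or_ne y z with rfl | hyz
    · exact hyf
    exact hG.mem_of_adj hf hxf hyf hxy (adj_of_mem_cliqueFinset he hxe hz hxz)
      (adj_of_mem_cliqueFinset he hye hz hyz)
  · rw [(SimpleGraph.mem_cliqueFinset_iff.1 he).card_eq,
      (SimpleGraph.mem_cliqueFinset_iff.1 hf).card_eq]

lemma not_hasBergeCycle_two (hG : IsC4Free G) : ¬ HasBergeCycle 2 (G.cliqueFinset 3) := by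
  rintro ⟨v, e, hv, he, hve⟩
  exact he.ne (zero_ne_one' (ZMod 2)) (hG.eq_of_mem_cliqueFinset (hve 0).1 (hve 1).1
    (hv.ne (zero_ne_one' (ZMod 2))) (hve 0).2.1 (hve 0).2.2 (hve 1).2.2 (hve 1).2.1)

lemma not_hasBergeCycle_three (hG : IsC4Free G) : ¬ HasBergeCycle 3 (G.cliqueFinset 3) := by
  rintro ⟨v, e, hv, he, hve⟩
  have h₀₁ : v 0 ≠ v 1 := hv.ne (by decide)
  have h₁₂ : v 1 ≠ v 2 := hv.ne (by decide)
  have h₂₀ : v 2 ≠ v 0 := hv.ne (by decide)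
  have hmem : v 2 ∈ e 0 := hG.mem_of_adj (hve 0).1 (hve 0).2.1 (hve 0).2.2 h₀₁
    (adj_of_mem_cliqueFinset (hve 2).1 (hve 2).2.1 (hve 2).2.2 h₂₀).symm
    (adj_of_mem_cliqueFinset (hve 1).1 (hve 1).2.1 (hve 1).2.2 h₁₂)
  exact he.ne (by decide : (0 : ZMod 3) ≠ 1) (hG.eq_of_mem_cliqueFinset (hve 0).1 (hve 1).1
    h₁₂ (hve 0).2.2 hmem (hve 1).2.1 (hve 1).2.2)

lemma not_hasBergeCycle_four (hG : IsC4Free G) : ¬ HasBergeCycle 4 (G.cliqueFinset 3) := by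
  rintro ⟨v, e, hv, -, hve⟩
  have hadj (i) : G.Adj (v i) (v (i + 1)) :=
    adj_of_mem_cliqueFinset (hve i).1 (hve i).2.1 (hve i).2.2
      (hv.ne ((add_ne_left.2 (by decide)).symm))
  exact hv.ne (by decide : (1 : ZMod 4) ≠ 3) (hG (hv.ne (by decide : (0 : ZMod 4) ≠ 2))
    ⟨hadj 0, (hadj 1).symm⟩ ⟨(hadj 3).symm, hadj 2⟩)

end IsC4Free

end Cliques

section Polarity

open Finset

variable {ι F : Type*} [Field F] {a : ι → F}

/-- The affine polarity graph of the field `F` restricted to the abscissae `a i`: the points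
`(i, x)` and `(j, y)` with `i ≠ j` are adjacent when `x + y = a i * a j`. -/
def polarityGraph (a : ι → F) : SimpleGraph (ι × F) where
  Adj p q := p.1 ≠ q.1 ∧ p.2 + q.2 = a p.1 * a q.1
  symm := ⟨fun _ _ h ↦ ⟨h.1.symm, by rw [add_comm, h.2, mul_comm]⟩⟩
  loopless := ⟨fun _ h ↦ h.1 rfl⟩

lemma isC4Free_polarityGraph (ha : Function.Injective a) : IsC4Free (polarityGraph a) := by
  rintro ⟨i, x⟩ ⟨j, y⟩ hne ⟨k, z⟩ ⟨⟨-, hxz⟩, -, hyz⟩ ⟨l, w⟩ ⟨⟨-, hxw⟩, -, hyw⟩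
  dsimp only at hxz hyz hxw hyw
  have hij : a i - a j ≠ 0 := by
    refine sub_ne_zero.2 fun h ↦ hne ?_
    obtain rfl := ha h
    exact Prod.ext rfl (by linear_combination hxz - hyz)
  have hkl : a k = a l := mul_left_cancel₀ hij (by linear_combination hxw - hxz + hyz - hyw)
  obtain rfl := ha hkl
  exact Prod.ext rfl (by linear_combination hxz - hxw)

lemma exists_isNClique_polarityGraph [DecidableEq ι] (h2 : (2 : F) ≠ 0) (a : ι → F)
    {S : Finset ι} (hS : #S = 3) :
    ∃ t, (polarityGraph a).IsNClique 3 t ∧ t.image Prod.fst = S := by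
  classical
  obtain ⟨i, j, k, hij, hik, hjk, rfl⟩ := card_eq_three.1 hS
  let x := (a i * a j + a i * a k - a j * a k) / 2
  let y := (a i * a j + a j * a k - a i * a k) / 2
  let z := (a i * a k + a j * a k - a i * a j) / 2
  refine ⟨{(i, x), (j, y), (k, z)}, SimpleGraph.is3Clique_triple_iff.2
    ⟨⟨hij, ?_⟩, ⟨hik, ?_⟩, ⟨hjk, ?_⟩⟩, by simp [image_insert]⟩
  all_goals
    simp only [x, y, z]
    field

end Polarity

section Extremal

open Finset

lemma exists_isRKHyper_card {F : Type*} [Field F] [Fintype F] (h2 : (2 : F) ≠ 0) {r : ℕ}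
    (hr : r ≤ Fintype.card F) :
    ∃ (N : ℕ) (E : Finset (Finset (Fin N))), IsUniform 3 E ∧
      (∀ H ∈ bergeCycles 3 2 ∪ bergeCycles 3 3 ∪ bergeCycles 3 4, ¬ HypContains H.2 E) ∧
      IsRKHyper E 3 r (Fintype.card F) := by
  classical
  obtain ⟨a⟩ : Nonempty (Fin r ↪ F) :=
    Function.Embedding.nonempty_of_card_le (by rwa [Fintype.card_fin])
  let φ := Fintype.equivFin (Fin r × F)
  let G := (polarityGraph a).comap φ.symm
  have hG : IsC4Free G := (isC4Free_polarityGraph a.injective).comap φ.symm.injective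
  have hE : IsUniform 3 (G.cliqueFinset 3) := fun e he ↦
    (SimpleGraph.mem_cliqueFinset_iff.1 he).card_eq
  refine ⟨_, G.cliqueFinset 3, hE, hE.forall_bergeCycles_not_hypContains_iff.2
    ⟨hG.not_hasBergeCycle_two, hG.not_hasBergeCycle_three, hG.not_hasBergeCycle_four⟩,
    hE.isRKHyper_iff.2 ⟨fun v ↦ (φ.symm v).1, fun i ↦ ?_, fun S hS ↦ ?_⟩⟩
  · refine card_le_card_of_injOn (t := univ) (fun v ↦ (φ.symm v).2) (fun _ _ ↦ mem_univ _) ?_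
    intro v hv w hw hvw
    simp only [coe_filter_univ, Set.mem_ofPred_eq] at hv hw
    exact φ.symm.injective (Prod.ext (hv.trans hw.symm) hvw)
  · obtain ⟨t, ht, rfl⟩ := exists_isNClique_polarityGraph h2 a hS
    refine ⟨t.map φ.toEmbedding, SimpleGraph.mem_cliqueFinset_iff.2 ?_, ?_⟩
    · rw [show G = (polarityGraph a).map φ.toEmbedding from SimpleGraph.comap_symm _ φ]
      exact ht.map
    · rw [map_eq_image, image_image]
      congr 1
      ext p
      simp

lemma exists_isRKHyper_prime {p r : ℕ} (hp : p.Prime) (hp2 : 2 < p) (hr : r ≤ p) :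
    ∃ (N : ℕ) (E : Finset (Finset (Fin N))), IsUniform 3 E ∧
      (∀ H ∈ bergeCycles 3 2 ∪ bergeCycles 3 3 ∪ bergeCycles 3 4, ¬ HypContains H.2 E) ∧
      IsRKHyper E 3 r p := by
  have : Fact p.Prime := ⟨hp⟩
  simpa only [ZMod.card] using exists_isRKHyper_card (F := ZMod p) (Ring.two_ne_zero
    (by rw [ZMod.ringChar_zmod_n]; exact hp2.ne')) (hr.trans_eq (ZMod.card p).symm)

lemma fHyper_le_prime {p r : ℕ} (hp : p.Prime) (hp2 : 2 < p) (hr : r ≤ p) :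
    fHyper 3 r (bergeCycles 3 2 ∪ bergeCycles 3 3 ∪ bergeCycles 3 4) ≤ p :=
  Nat.sInf_le (exists_isRKHyper_prime hp hp2 hr)

lemma le_fHyper_add_three (r : ℕ) :
    r ≤ fHyper 3 r (bergeCycles 3 2 ∪ bergeCycles 3 3 ∪ bergeCycles 3 4) + 3 := by
  obtain ⟨p, hrp, hp⟩ := Nat.exists_infinite_primes (max r 3)
  obtain ⟨N, E, hE, hfree, hrk⟩ := Nat.sInf_mem (s := {k | ∃ (N : ℕ) (E : Finset (Finset (Fin N))),
    IsUniform 3 E ∧ (∀ H ∈ bergeCycles 3 2 ∪ bergeCycles 3 3 ∪ bergeCycles 3 4,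
      ¬ HypContains H.2 E) ∧ IsRKHyper E 3 r k})
    ⟨p, exists_isRKHyper_prime hp (by omega) (by omega)⟩
  obtain ⟨h₂, h₃, h₄⟩ := hE.forall_bergeCycles_not_hypContains_iff.1 hfree
  exact hrk.le_add_three hE h₂ h₃ h₄

end Extremal

/-- For every `ε > 0`, for all sufficiently large `r`,
`(1−ε)·r ≤ f_3(r, {𝒞_2^{(3)}, 𝒞_3^{(3)}, 𝒞_4^{(3)}}) ≤ (1+ε)·r`. -/
theorem stmt8 (ε : ℝ) (hε : 0 < ε) :
    ∃ r₀ : ℕ, ∀ r : ℕ, r₀ ≤ r →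
      (1 - ε) * (r : ℝ)
          ≤ (fHyper 3 r (bergeCycles 3 2 ∪ bergeCycles 3 3 ∪ bergeCycles 3 4) : ℝ) ∧
      (fHyper 3 r (bergeCycles 3 2 ∪ bergeCycles 3 3 ∪ bergeCycles 3 4) : ℝ)
          ≤ (1 + ε) * (r : ℝ) := by
  have hprime := tendsto_natCast_atTop_atTop.eventually (eventually_exists_prime_mem_Icc hε)
  have hlarge := tendsto_natCast_atTop_atTop.eventually (Filter.eventually_ge_atTop (3 / ε))
  refine Filter.eventually_atTop.1 ?_
  filter_upwards [hprime, hlarge, Filter.eventually_ge_atTop 3] with r ⟨p, hp, hrp, hpr⟩ hεr hr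
  have hrp : r ≤ p := by exact_mod_cast hrp
  constructor
  · have hle : (r : ℝ) ≤
        fHyper 3 r (bergeCycles 3 2 ∪ bergeCycles 3 3 ∪ bergeCycles 3 4) + 3 := by
      exact_mod_cast le_fHyper_add_three r
    rw [div_le_iff₀ hε] at hεr
    linarith
  · refine le_trans ?_ hpr
    exact_mod_cast fHyper_le_prime hp (by omega) hrp
end

section
/- For every integer t ≥ 2 there exists a constant C_t > 0 such that the following holds: if q is an even power of an odd prime, d is a positive integer dividing q − 1, and a ≤ h are positive integers with h·a = (q−1)/d, then f(q^{t−1}·a, K_{t, (t−1)!·d^{t−1} + 1}) ≤ a + h + C_t · h^{2/5}, where K_{s,t'} denotes the complete bipartite graph with parts of sizes s and t'. -/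
open SimpleGraph

/-- `G` is an `(r,k)`-graph: its vertex set can be partitioned into `r` parts,
each of size at most `k`, with at least one edge between any two distinct parts. -/
def IsRKGraph {V : Type} [Fintype V] (G : SimpleGraph V) (r k : ℕ) : Prop :=
  ∃ P : Fin r → Finset V,
    (∀ v : V, ∃! i, v ∈ P i) ∧
    (∀ i, (P i).card ≤ k) ∧
    ∀ i j : Fin r, i ≠ j → ∃ u ∈ P i, ∃ w ∈ P j, G.Adj u w

/-- `G` contains a subgraph isomorphic to `H`. -/
def ContainsSub {W V : Type} (H : SimpleGraph W) (G : SimpleGraph V) : Prop :=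
  ∃ f : H →g G, Function.Injective f

/-- `f(r,H)`: the minimum `k` for which there exists an `H`-free `(r,k)`-graph. -/
noncomputable def fGraph {W : Type} (H : SimpleGraph W) (r : ℕ) : ℕ :=
  sInf {k | ∃ (n : ℕ) (G : SimpleGraph (Fin n)), ¬ ContainsSub H G ∧ IsRKGraph G r k}

/-!
Let `E / F` be the extension of degree `t - 1` of the field with `q` elements, and index the parts
by `E × Fin a`. A part receives `h` left and `a` right vertices labelled by points of `E × F`, a
left and a right vertex being joined when `N (X + Y) ^ d = x * y`. The values `N (X + Y) ^ d` lie in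
a group of order `h * a`, and writing exponents in base `a` lets the two parts `(X, i)` and `(Y, j)`
realise each of them, so they are joined as soon as `X + Y ≠ 0`. The parts with `X + Y = 0` are
joined by `2 p` further vertices per part, through the `K_{2,2}`-free incidence graph
`y + v = x * u` over the field with `p ^ 2` elements, seen as `ZMod p × ZMod p`; this requires
`a ≤ p ^ 3`, and Bertrand's postulate supplies such a `p` with `p ≤ 4 * a ^ (1 / 3)`.

The norm relation contains no large biclique: after inverting and extracting `d`-th roots, the
common neighbours of `t` points become the solutions `z` of `t - 1` equations `N (z - c i) = b i`.
Splitting the norms into conjugates, one gets the system `∏ j, (x j - c i j) = b i` of Kollár,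
Rónyai and Szabó. The polynomials on its left side are algebraically independent, and by a valuation
argument the polynomial ring is finite over the algebra they generate. Its rank over this integrally
closed domain is at most the dimension `(t - 1)!` of its quotient by these polynomials, and it
bounds the number of values that any fixed polynomial takes on the solutions of the system.
-/

open Finset
open scoped Nat

lemma natDegree_minpoly_le_finrank {A B : Type*} [CommRing A] [IsDomain A] [IsIntegrallyClosed A]
    [CommRing B] [IsDomain B] [Algebra A B] [FaithfulSMul A B] [Module.Finite A B] (u : B) :
    (minpoly A u).natDegree ≤ Module.finrank A B := by
  have hu : IsIntegral A u := Algebra.IsIntegral.isIntegral u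
  rw [← Algebra.adjoin.powerBasis'_dim hu, ← (Algebra.adjoin.powerBasis' hu).finrank]
  exact Submodule.finrank_le (Subalgebra.toSubmodule (Algebra.adjoin A {u}))

lemma card_image_apply_le_finrank {A B K : Type*} [CommRing A] [IsDomain A] [IsIntegrallyClosed A]
    [CommRing B] [IsDomain B] [Algebra A B] [FaithfulSMul A B] [Module.Finite A B]
    [CommRing K] [IsDomain K] [DecidableEq K] {f : A →+* K} {α : Type*} {S : Finset α}
    {g : α → B →+* K} (hg : ∀ x ∈ S, (g x).comp (algebraMap A B) = f) (u : B) :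
    #(S.image fun x ↦ g x u) ≤ Module.finrank A B := by
  have hu : IsIntegral A u := Algebra.IsIntegral.isIntegral u
  have hmonic := (minpoly.monic hu).map f
  calc #(S.image fun x ↦ g x u)
    _ ≤ #((minpoly A u).map f).roots.toFinset := by
      refine card_le_card fun z hz ↦ ?_
      obtain ⟨x, hx, rfl⟩ := mem_image.1 hz
      rw [Multiset.mem_toFinset, Polynomial.mem_roots hmonic.ne_zero, Polynomial.IsRoot,
        Polynomial.eval_map, ← hg x hx, ← Polynomial.hom_eval₂, ← Polynomial.aeval_def,
        minpoly.aeval, map_zero]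
    _ ≤ ((minpoly A u).map f).natDegree :=
      (Multiset.toFinset_card_le _).trans (Polynomial.card_roots' _)
    _ = (minpoly A u).natDegree := (minpoly.monic hu).natDegree_map f
    _ ≤ Module.finrank A B := natDegree_minpoly_le_finrank u

lemma rank_le_rank_of_sup_smul_top_eq_top {A M : Type*} [CommRing A] [IsDomain A] [AddCommGroup M]
    [Module A M] [Module.Finite A M] {I : Ideal A} (hI : I ≠ ⊤) {N : Submodule A M}
    (hN : N ⊔ I • ⊤ = ⊤) : Module.rank A M ≤ Module.rank A N := by
  have hle : (⊤ : Submodule A (M ⧸ N)) ≤ I • ⊤ := by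
    simpa [Submodule.map_sup, Submodule.map_smul''] using (congrArg (Submodule.map N.mkQ) hN).ge
  obtain ⟨r, hr, hrM⟩ := Submodule.exists_sub_one_mem_and_smul_eq_zero_of_fg_of_le_smul I ⊤
    Module.Finite.fg_top hle
  have hr0 : r ≠ 0 := by
    rintro rfl
    exact hI ((Ideal.eq_top_iff_one I).2 (by simpa using hr))
  have hzero : Module.rank A (M ⧸ N) = 0 := rank_eq_zero_iff.2 fun x ↦ ⟨r, hr0, hrM x trivial⟩
  rw [← rank_quotient_add_rank_of_isDomain N, hzero, zero_add]

lemma exists_finset_span_sup_eq_top {K V : Type*} [Field K] [AddCommGroup V] [Module K V]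
    {W : Submodule K V} {n : ℕ} (hW : Module.rank K (V ⧸ W) ≤ n) :
    ∃ s : Finset V, #s ≤ n ∧ Submodule.span K (s : Set V) ⊔ W = ⊤ := by
  obtain ⟨W', hW'⟩ := W.exists_isCompl
  have hrank : W'.spanRank ≤ n := by
    rwa [← Submodule.spanRank_top, ← Submodule.rank_eq_spanRank_of_free,
      ← (W.quotientEquivOfIsCompl W' hW').rank_eq]
  have hfg : W'.FG := Submodule.spanRank_finite_iff_fg.1
    (hrank.trans_lt (Cardinal.natCast_lt_aleph0))
  obtain ⟨s, hs, hspan⟩ := hfg.exists_span_finset_card_eq_spanFinrank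
  exact ⟨s, hs.trans_le ((hfg.spanRank_le_iff n).1 hrank), by rw [hspan, sup_comm, hW'.sup_eq_top]⟩

section RankQuotient

variable {K B : Type*} [Field K] [CommRing B] [Algebra K B]

lemma rank_quotient_sup_span_mul_le (J : Ideal B) (g h : B) :
    Module.rank K (B ⧸ J ⊔ Ideal.span {g * h}) ≤
      Module.rank K (B ⧸ J ⊔ Ideal.span {g}) + Module.rank K (B ⧸ J ⊔ Ideal.span {h}) := by
  -- The sequence `B ⧸ (J + (h)) → B ⧸ (J + (g * h)) → B ⧸ (J + (g)) → 0` is exact, its first map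
  -- being multiplication by `g`.
  have hg : J ⊔ Ideal.span {g * h} ≤ J ⊔ Ideal.span {g} :=
    sup_le_sup_left (Ideal.span_singleton_le_span_singleton.2 (dvd_mul_right g h)) J
  let π := (Ideal.Quotient.factorₐ K hg).toLinearMap
  let ν := (Ideal.Quotient.mkₐ K (J ⊔ Ideal.span {g * h})).toLinearMap ∘ₗ LinearMap.mulLeft K g
  have hν : (J ⊔ Ideal.span {h}).restrictScalars K ≤ LinearMap.ker ν := by
    intro x hx
    obtain ⟨b, j, hj, rfl⟩ := Ideal.mem_span_singleton_sup.1 (sup_comm J _ ▸ hx)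
    refine Ideal.Quotient.eq_zero_iff_mem.2 ?_
    rw [LinearMap.mulLeft_apply, mul_add, add_comm, mul_left_comm]
    exact Submodule.add_mem_sup (J.mul_mem_left g hj)
      (Ideal.mul_mem_left _ b (Ideal.mem_span_singleton_self _))
  have hπ : LinearMap.ker π ≤ LinearMap.range (Submodule.liftQ _ ν hν) := by
    rw [Submodule.range_liftQ]
    intro x hx
    obtain ⟨y, rfl⟩ := Ideal.Quotient.mk_surjective x
    obtain ⟨b, j, hj, rfl⟩ := Ideal.mem_span_singleton_sup.1
      (sup_comm J _ ▸ Ideal.Quotient.eq_zero_iff_mem.1 hx)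
    refine ⟨b, Ideal.Quotient.eq.2 (Ideal.mem_sup_left ?_)⟩
    rw [LinearMap.mulLeft_apply, mul_comm g, sub_add_cancel_left]
    exact J.neg_mem hj
  rw [← LinearMap.rank_range_add_rank_ker π]
  refine add_le_add (Submodule.rank_le _) ?_
  rw [← (Submodule.Quotient.restrictScalarsEquiv K (J ⊔ Ideal.span {h})).rank_eq]
  exact (Submodule.rank_mono hπ).trans (rank_range_le _)

lemma rank_quotient_sup_span_prod_le {κ : Type*} (s : Finset κ) (J : Ideal B) (g : κ → B) :
    Module.rank K (B ⧸ J ⊔ Ideal.span {∏ j ∈ s, g j}) ≤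
      ∑ j ∈ s, Module.rank K (B ⧸ J ⊔ Ideal.span {g j}) := by
  classical
  induction s using Finset.induction_on with
  | empty =>
    have : Subsingleton (B ⧸ J ⊔ Ideal.span {∏ j ∈ ∅, g j}) :=
      Ideal.Quotient.subsingleton_iff.2 (by simp)
    rw [rank_subsingleton', sum_empty]
  | insert a s ha ih =>
    rw [prod_insert ha, sum_insert ha]
    exact (rank_quotient_sup_span_mul_le J _ _).trans (by gcongr)

end RankQuotient

lemma isIntegral_of_forall_valuationSubring {R L : Type*} [CommRing R] [Field L] [Algebra R L]
    {x : L} (hx : ∀ V : ValuationSubring L, (∀ r, algebraMap R L r ∈ V) → x ∈ V) :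
    IsIntegral R x := by
  have hmem : x ∈ (integralClosure (⊥ : Subalgebra R L).toSubring L).toSubring := by
    rw [← Subring.closure_eq (⊥ : Subalgebra R L).toSubring, ← iInf_valuationSubring_superset,
      Subring.mem_iInf]
    exact fun ⟨V, hV⟩ ↦ hx V fun r ↦ hV (Subalgebra.algebraMap_mem _ r)
  exact isIntegral_trans (A := (⊥ : Subalgebra R L)) x hmem

section ShiftProd

open MvPolynomial

lemma rank_quotient_le_one {K κ : Type*} [Field K] {J : Ideal (MvPolynomial κ K)}
    (hJ : ∀ j, ∃ a, X j - C a ∈ J) : Module.rank K (MvPolynomial κ K ⧸ J) ≤ 1 := by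
  choose a ha using hJ
  have hmk : (algebraMap K (MvPolynomial κ K ⧸ J)).comp (eval a) = Ideal.Quotient.mk J := by
    refine MvPolynomial.ringHom_ext (fun r ↦ ?_) (fun j ↦ ?_)
    · rw [RingHom.comp_apply, eval_C]
      rfl
    · rw [RingHom.comp_apply, eval_X]
      exact (Ideal.Quotient.eq.2 (ha j)).symm
  have hsurj : Function.Surjective (Algebra.linearMap K (MvPolynomial κ K ⧸ J)) := by
    intro x
    obtain ⟨p, rfl⟩ := Ideal.Quotient.mk_surjective x
    exact ⟨eval a p, congr($hmk p)⟩
  simpa using LinearMap.lift_rank_le_of_surjective _ hsurj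

lemma sup_span_X_sub_C_eq_top {K κ : Type*} [Field K] {J : Ideal (MvPolynomial κ K)} {j : κ}
    {a b : K} (hab : a ≠ b) (ha : X j - C a ∈ J) : J ⊔ Ideal.span {X j - C b} = ⊤ := by
  refine Ideal.eq_top_of_isUnit_mem _ (x := C (a - b)) ?_ ((sub_ne_zero.2 hab).isUnit.map C)
  rw [C_sub, ← sub_sub_sub_cancel_left (C b) (C a) (X j)]
  exact sub_mem (Ideal.mem_sup_right (Ideal.mem_span_singleton_self _)) (Ideal.mem_sup_left ha)

variable {K ι κ : Type*} [Field K] [Fintype κ]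

lemma rank_quotient_sup_span_prod_X_sub_C_le {J : Ideal (MvPolynomial κ K)} {u : Finset κ} {n : ℕ}
    {a : κ → K} (hin : ∀ j ∈ u, Module.rank K (_ ⧸ J ⊔ Ideal.span {X j - C (a j)}) ≤ n)
    (hout : ∀ j ∉ u, ∃ b, X j - C b ∈ J ∧ b ≠ a j) :
    Module.rank K (_ ⧸ J ⊔ Ideal.span {∏ j, (X j - C (a j))}) ≤ (#u * n : ℕ) := by
  have hzero : ∀ j ∉ u, Module.rank K (_ ⧸ J ⊔ Ideal.span {X j - C (a j)}) = 0 := by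
    intro j hj
    obtain ⟨b, hbJ, hb⟩ := hout j hj
    have := Ideal.Quotient.subsingleton_iff.2 (sup_span_X_sub_C_eq_top hb hbJ)
    exact rank_subsingleton' _ _
  calc Module.rank K (_ ⧸ J ⊔ Ideal.span {∏ j, (X j - C (a j))})
    _ ≤ ∑ j, Module.rank K (_ ⧸ J ⊔ Ideal.span {X j - C (a j)}) :=
      rank_quotient_sup_span_prod_le _ _ _
    _ = ∑ j ∈ u, Module.rank K (_ ⧸ J ⊔ Ideal.span {X j - C (a j)}) :=
      (sum_subset (subset_univ u) fun j _ ↦ hzero j).symm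
    _ ≤ #u • (n : Cardinal) := sum_le_card_nsmul _ _ _ hin
    _ = (#u * n : ℕ) := by rw [nsmul_eq_mul, Nat.cast_mul]

/-- The polynomial `∏ j, (X j - c i j)`. The system `∏ j, (x j - c i j) = b i` of
Kollár, Rónyai and Szabó describes the fibres of the map `x ↦ (shiftProd c i) x`. -/
noncomputable def shiftProd (c : ι → κ → K) (i : ι) : MvPolynomial κ K := ∏ j, (X j - C (c i j))

lemma rank_quotient_sup_span_shiftProd_le {c : ι → κ → K}
    (hc : ∀ j, Function.Injective fun i ↦ c i j) {s : Finset ι} {u : Finset κ}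
    (hu : #u = #s) {J : Ideal (MvPolynomial κ K)}
    (hJ : ∀ j ∉ u, ∃ a, X j - C a ∈ J ∧ ∀ i ∈ s, a ≠ c i j) :
    Module.rank K (MvPolynomial κ K ⧸ J ⊔ Ideal.span (shiftProd c '' s)) ≤ (#s)! := by
  classical
  induction s using Finset.induction_on generalizing u J with
  | empty =>
    obtain rfl : u = ∅ := by simpa using hu
    refine (rank_quotient_le_one fun j ↦ ?_).trans (by simp)
    obtain ⟨a, ha, -⟩ := hJ j (notMem_empty j)
    exact ⟨a, Ideal.mem_sup_left ha⟩
  | insert i s hi ih =>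
    have hspan : J ⊔ Ideal.span (shiftProd c '' ↑(insert i s)) =
        (J ⊔ Ideal.span (shiftProd c '' s)) ⊔ Ideal.span {shiftProd c i} := by
      rw [coe_insert, Set.image_insert_eq, Ideal.span_insert, sup_comm (Ideal.span _), sup_assoc]
    rw [card_insert_of_notMem hi] at hu ⊢
    rw [hspan, Nat.factorial_succ, ← hu]
    -- Modulo the factor `X j - c i j`, the factors at `j` of the other polynomials become units, so
    -- `j` can be dropped from `u`.
    refine rank_quotient_sup_span_prod_X_sub_C_le (fun j hj ↦ ?_) fun j hj ↦ ?_
    · rw [sup_right_comm]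
      refine ih (u := u.erase j) (by rw [card_erase_of_mem hj, hu]; rfl) fun j' hj' ↦ ?_
      obtain rfl | hne := eq_or_ne j' j
      · exact ⟨c i j', Ideal.mem_sup_right (Ideal.mem_span_singleton_self _),
          fun k hk ↦ (hc j').ne (ne_of_mem_of_not_mem hk hi).symm⟩
      · obtain ⟨a, ha, has⟩ := hJ j' fun h ↦ hj' (mem_erase.2 ⟨hne, h⟩)
        exact ⟨a, Ideal.mem_sup_left ha, fun k hk ↦ has k (mem_insert_of_mem hk)⟩
    · obtain ⟨a, ha, has⟩ := hJ j hj
      exact ⟨a, Ideal.mem_sup_left ha, has i (mem_insert_self i s)⟩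

lemma exists_valuation_sub_lt_one {L : Type*} [Field L] {V : ValuationSubring L} {x a : κ → L}
    (ha : ∀ j, a j ∈ V) (hprod : ∏ j, (x j - a j) ∈ V) {j : κ} (hj : x j ∉ V) :
    ∃ k, V.valuation (x k - a k) < 1 := by
  by_contra! hcon
  have hle := calc V.valuation (x j - a j)
    _ ≤ ∏ k, V.valuation (x k - a k) := single_le_prod' (fun k _ ↦ hcon k) (mem_univ j)
    _ = V.valuation (∏ k, (x k - a k)) := (map_prod _ _ _).symm
    _ ≤ 1 := (V.valuation_le_one_iff _).2 hprod
  exact hj ((sub_add_cancel (x j) (a j)) ▸ add_mem ((V.valuation_le_one_iff _).1 hle) (ha j))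

lemma mem_valuationSubring_of_prod_sub_mem {L : Type*} [Field L] [Algebra K L] [Fintype ι]
    (hcard : Fintype.card κ ≤ Fintype.card ι) {c : ι → κ → K}
    (hc : ∀ j, Function.Injective fun i ↦ c i j) {V : ValuationSubring L}
    (hV : ∀ a, algebraMap K L a ∈ V) {x : κ → L}
    (hx : ∀ i, ∏ j, (x j - algebraMap K L (c i j)) ∈ V) (j : κ) : x j ∈ V := by
  by_contra hj
  choose k hk using fun i ↦ exists_valuation_sub_lt_one (fun j ↦ hV (c i j)) (hx i) hj
  -- At a common index, the nonzero constant `c i (k i) - c i' (k i)` would have valuation `< 1`.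
  have hinj : Function.Injective k := by
    intro i i' hii'
    by_contra hne
    have hlt := Valuation.map_sub_lt V.valuation (hii' ▸ hk i') (hk i)
    rw [sub_sub_sub_cancel_left, ← map_sub] at hlt
    have hunit : c i (k i) - c i' (k i) ≠ 0 := sub_ne_zero.2 ((hc (k i)).ne hne)
    have hinv := (V.valuation_le_one_iff _).2 (hV (c i (k i) - c i' (k i))⁻¹)
    rw [map_inv₀, map_inv₀, inv_le_one₀] at hinv
    · exact hlt.not_ge hinv
    · exact zero_lt_iff.2 (V.valuation.ne_zero_iff.2 ((map_ne_zero _).2 hunit))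
  obtain ⟨i, rfl⟩ := ((Fintype.bijective_iff_injective_and_card k).2
    ⟨hinj, (Fintype.card_le_of_injective k hinj).antisymm hcard⟩).surjective j
  exact hj (sub_add_cancel (x (k i)) _ ▸
    add_mem ((V.valuation_le_one_iff _).1 (hk i).le) (hV (c i (k i))))

lemma finrank_le_of_rank_quotient_map_le {K A B : Type*} [Field K] [CommRing A] [IsDomain A]
    [CommRing B] [Algebra K A] [Algebra K B] [Algebra A B] [IsScalarTower K A B]
    [Module.Finite A B] {I : Ideal A} (hI : I ≠ ⊤) {n : ℕ}
    (hn : Module.rank K (B ⧸ I.map (algebraMap A B)) ≤ n) : Module.finrank A B ≤ n := by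
  rw [← (Submodule.Quotient.restrictScalarsEquiv K (I.map (algebraMap A B))).rank_eq] at hn
  obtain ⟨s, hs, hspan⟩ := exists_finset_span_sup_eq_top hn
  have hgen : Submodule.span A (s : Set B) ⊔ I • ⊤ = ⊤ := by
    rw [Ideal.smul_top_eq_map, ← Submodule.restrictScalars_eq_top_iff K, eq_top_iff, ← hspan]
    exact sup_le (fun x hx ↦ Submodule.mem_sup_left (Submodule.span_subset_span K A _ hx))
      fun x hx ↦ Submodule.mem_sup_right hx
  refine Module.finrank_le_of_rank_le ?_
  calc Module.rank A B
    _ ≤ Module.rank A (Submodule.span A (s : Set B)) := rank_le_rank_of_sup_smul_top_eq_top hI hgen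
    _ ≤ #s := rank_span_finset_le s
    _ ≤ n := by exact_mod_cast hs

variable [Fintype ι]

lemma isIntegral_X_adjoin_shiftProd (hcard : Fintype.card κ ≤ Fintype.card ι) {c : ι → κ → K}
    (hc : ∀ j, Function.Injective fun i ↦ c i j) (j : κ) :
    IsIntegral (Algebra.adjoin K (Set.range (shiftProd c))) (X j : MvPolynomial κ K) := by
  let L := FractionRing (MvPolynomial κ K)
  rw [← isIntegral_algebraMap_iff (FaithfulSMul.algebraMap_injective (MvPolynomial κ K) L)]
  refine isIntegral_of_forall_valuationSubring fun V hV ↦ ?_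
  refine mem_valuationSubring_of_prod_sub_mem hcard hc
    (fun a ↦ hV (algebraMap K _ a)) (x := fun j ↦ algebraMap _ L (X j)) (fun i ↦ ?_) j
  convert hV ⟨shiftProd c i, Algebra.subset_adjoin (Set.mem_range_self i)⟩
  change _ = algebraMap _ L (shiftProd c i)
  simp only [shiftProd, map_prod, map_sub]
  rfl

lemma finite_adjoin_shiftProd (hcard : Fintype.card κ ≤ Fintype.card ι) {c : ι → κ → K}
    (hc : ∀ j, Function.Injective fun i ↦ c i j) :
    Module.Finite (Algebra.adjoin K (Set.range (shiftProd c))) (MvPolynomial κ K) := by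
  let A := Algebra.adjoin K (Set.range (shiftProd c))
  have : Algebra.IsIntegral A (MvPolynomial κ K) := by
    refine ⟨fun p ↦ ?_⟩
    induction p using MvPolynomial.induction_on with
    | C a => exact isIntegral_algebraMap (x := algebraMap K A a)
    | add p q hp hq => exact hp.add hq
    | mul_X p j hp => exact hp.mul (isIntegral_X_adjoin_shiftProd hcard hc j)
  have : Algebra.FiniteType A (MvPolynomial κ K) :=
    Algebra.FiniteType.of_restrictScalars_finiteType K A _
  exact Algebra.IsIntegral.finite

lemma algebraicIndependent_shiftProd (hcard : Fintype.card ι = Fintype.card κ) {c : ι → κ → K}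
    (hc : ∀ j, Function.Injective fun i ↦ c i j) : AlgebraicIndependent K (shiftProd c) := by
  have := finite_adjoin_shiftProd hcard.ge hc
  refine (Algebra.IsAlgebraic.isTranscendenceBasis_of_lift_le_trdeg_of_finite K (shiftProd c) ?_).1
  rw [MvPolynomial.trdeg_of_isDomain]
  simp [hcard]

lemma span_range_shiftProd_ne_top (hcard : Fintype.card ι = Fintype.card κ) (c : ι → κ → K) :
    Ideal.span (Set.range (shiftProd c)) ≠ ⊤ := by
  let e := Fintype.equivOfCardEq hcard
  refine ne_top_of_le_ne_top (RingHom.ker_ne_top (eval fun j ↦ c (e.symm j) j)) ?_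
  rw [Ideal.span_le]
  rintro _ ⟨i, rfl⟩
  rw [SetLike.mem_coe, RingHom.mem_ker, shiftProd, map_prod]
  exact prod_eq_zero (mem_univ (e i)) (by simp)

lemma finrank_adjoin_shiftProd_le (hcard : Fintype.card ι = Fintype.card κ) {c : ι → κ → K}
    (hc : ∀ j, Function.Injective fun i ↦ c i j) :
    Module.finrank (Algebra.adjoin K (Set.range (shiftProd c))) (MvPolynomial κ K) ≤
      (Fintype.card ι)! := by
  let A := Algebra.adjoin K (Set.range (shiftProd c))
  have := finite_adjoin_shiftProd hcard.ge hc
  let I : Ideal A := Ideal.span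
    (Set.range fun i ↦ ⟨shiftProd c i, Algebra.subset_adjoin (Set.mem_range_self i)⟩)
  have hmap : I.map (algebraMap A _) = Ideal.span (Set.range (shiftProd c)) := by
    rw [Ideal.map_span, ← Set.range_comp]
    rfl
  have hI : I ≠ ⊤ := fun h ↦ span_range_shiftProd_ne_top hcard c (by rw [← hmap, h, Ideal.map_top])
  refine finrank_le_of_rank_quotient_map_le (K := K) hI ?_
  rw [hmap, ← bot_sup_eq (Ideal.span _), ← Set.image_univ, ← coe_univ]
  exact rank_quotient_sup_span_shiftProd_le hc (u := univ) hcard.symm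
    fun j hj ↦ absurd (mem_univ j) hj

lemma card_image_eval_le_factorial [DecidableEq K] (hcard : Fintype.card ι = Fintype.card κ)
    {c : ι → κ → K} (hc : ∀ j, Function.Injective fun i ↦ c i j) {b : ι → K} {α : Type*}
    {S : Finset α} {x : α → κ → K} (hx : ∀ z ∈ S, ∀ i, ∏ j, (x z j - c i j) = b i)
    (p : MvPolynomial κ K) :
    #(S.image fun z ↦ eval (x z) p) ≤ (Fintype.card ι)! := by
  obtain rfl | ⟨w, hw⟩ := S.eq_empty_or_nonempty
  · simp
  let A := Algebra.adjoin K (Set.range (shiftProd c))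
  have heval (z) (hz : z ∈ S) (i) : aeval (x z) (shiftProd c i) = b i := by
    simp [shiftProd, hx z hz i]
  have hg (z) (hz : z ∈ S) :
      (eval (x z)).comp (algebraMap A _) = (eval (x w)).comp (algebraMap A _) := by
    have : (aeval (x z)).comp A.val = (aeval (x w)).comp A.val := by
      refine AlgHom.adjoin_ext ?_
      rintro _ ⟨i, rfl⟩
      exact (heval z hz i).trans (heval w hw i).symm
    exact congr(AlgHom.toRingHom $this)
  have := finite_adjoin_shiftProd hcard.ge hc
  have : IsIntegrallyClosed A :=
    .of_equiv (algebraicIndependent_shiftProd hcard hc).aevalEquiv.toRingEquiv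
  exact (card_image_apply_le_finrank hg p).trans (finrank_adjoin_shiftProd_le hcard hc)

end ShiftProd

section Norm

variable {F E ι : Type*} [Field F] [Field E] [Algebra F E] [FiniteDimensional F E] [IsGalois F E]
  [Fintype ι]

lemma card_le_factorial_of_norm_sub_eq (hcard : Fintype.card ι = Module.finrank F E) {c : ι → E}
    (hc : Function.Injective c) {b : ι → F} {S : Finset E}
    (hS : ∀ z ∈ S, ∀ i, Algebra.norm F (z - c i) = b i) : #S ≤ (Fintype.card ι)! := by
  classical
  have hcard' : Fintype.card ι = Fintype.card (E ≃ₐ[F] E) := by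
    rw [hcard, ← Nat.card_eq_fintype_card, IsGalois.card_aut_eq_finrank]
  have hprod : ∀ z ∈ S, ∀ i, ∏ σ : E ≃ₐ[F] E, (σ z - σ (c i)) = algebraMap F E (b i) := by
    intro z hz i
    simp only [← hS z hz i, Algebra.norm_eq_prod_automorphisms, map_sub]
  simpa using card_image_eval_le_factorial hcard' (fun σ ↦ σ.injective.comp hc) hprod
    (MvPolynomial.X 1)

lemma card_le_of_norm_sub_pow_eq (hcard : Fintype.card ι = Module.finrank F E) {c : ι → E}
    (hc : Function.Injective c) {d : ℕ} (hd : 0 < d) {b : ι → F} {S : Finset E}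
    (hS : ∀ z ∈ S, ∀ i, Algebra.norm F (z - c i) ^ d = b i) :
    #S ≤ (Fintype.card ι)! * d ^ Fintype.card ι := by
  classical
  let T := Fintype.piFinset fun i ↦ Polynomial.nthRootsFinset d (b i)
  have hT : #T ≤ d ^ Fintype.card ι := by
    rw [Fintype.card_piFinset]
    exact prod_le_pow_card _ _ _ fun i _ ↦
      (Multiset.toFinset_card_le _).trans (Polynomial.card_nthRoots d (b i))
  refine (card_le_mul_card_image_of_maps_to (t := T) (f := fun z i ↦ Algebra.norm F (z - c i))
    (fun z hz ↦ ?_) _ fun y _ ↦ ?_).trans (Nat.mul_le_mul_left _ hT)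
  · simpa [T, Polynomial.mem_nthRootsFinset hd] using hS z hz
  · refine card_le_factorial_of_norm_sub_eq hcard hc (b := y) fun z hz i ↦ ?_
    exact congrFun (mem_filter.1 hz).2 i

end Norm

/-- The relation `S` contains no complete bipartite relation `A × B` with `t` elements in `A` and
`s` elements in `B`, that is, no `K_{t,s}` with its `t`-side on the left. -/
def BicliqueFree {α β : Type*} (t s : ℕ) (S : α → β → Prop) : Prop :=
  ∀ (A : Finset α) (B : Finset β), (∀ x ∈ A, ∀ y ∈ B, S x y) → #A < t ∨ #B < s

section BicliqueFree

variable {α β α' β' : Type*} {t s : ℕ} {S : α → β → Prop}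

lemma BicliqueFree.mono {t' s' : ℕ} (h : BicliqueFree t s S) (ht : t ≤ t') (hs : s ≤ s') :
    BicliqueFree t' s' S :=
  fun A B hAB ↦ (h A B hAB).imp (·.trans_le ht) (·.trans_le hs)

lemma BicliqueFree.comap (h : BicliqueFree t s S) {f : α' → α} {g : β' → β}
    (hf : Function.Injective f) (hg : Function.Injective g) :
    BicliqueFree t s fun x y ↦ S (f x) (g y) := by
  intro A B hAB
  simpa using h (A.map ⟨f, hf⟩) (B.map ⟨g, hg⟩) (by simpa using hAB)

lemma BicliqueFree.liftRel {S' : α' → β' → Prop} (h : BicliqueFree t s S)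
    (h' : BicliqueFree t s S') (ht : 0 < t) (hs : 0 < s) :
    BicliqueFree t s (Sum.LiftRel S S') := by
  intro A B hAB
  have hl := h A.toLeft B.toLeft fun x hx y hy ↦
    Sum.liftRel_inl_inl.1 (hAB _ (mem_toLeft.1 hx) _ (mem_toLeft.1 hy))
  have hr := h' A.toRight B.toRight fun x hx y hy ↦
    Sum.liftRel_inr_inr.1 (hAB _ (mem_toRight.1 hx) _ (mem_toRight.1 hy))
  have hlr : #A.toLeft = 0 ∨ #B.toRight = 0 := by
    by_contra! hcon
    obtain ⟨⟨x, hx⟩, y, hy⟩ := hcon.imp Finset.card_ne_zero.1 Finset.card_ne_zero.1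
    exact Sum.not_liftRel_inl_inr (hAB _ (mem_toLeft.1 hx) _ (mem_toRight.1 hy))
  have hrl : #A.toRight = 0 ∨ #B.toLeft = 0 := by
    by_contra! hcon
    obtain ⟨⟨x, hx⟩, y, hy⟩ := hcon.imp Finset.card_ne_zero.1 Finset.card_ne_zero.1
    exact Sum.not_liftRel_inr_inl (hAB _ (mem_toRight.1 hx) _ (mem_toLeft.1 hy))
  rw [← card_toLeft_add_card_toRight (u := A), ← card_toLeft_add_card_toRight (u := B)]
  lia

lemma flip_liftRel (S : α → β → Prop) (S' : α' → β' → Prop) :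
    flip (Sum.LiftRel S S') = Sum.LiftRel (flip S) (flip S') := by
  ext (y | y) (x | x) <;> simp [flip]

lemma bicliqueFree_two_two
    (h : ∀ x x' y y', S x y → S x y' → S x' y → S x' y' → x = x' ∨ y = y') :
    BicliqueFree 2 2 S := by
  intro A B hAB
  by_contra! hcon
  obtain ⟨x, hx, x', hx', hxx'⟩ := one_lt_card.1 hcon.1
  obtain ⟨y, hy, y', hy', hyy'⟩ := one_lt_card.1 hcon.2
  exact (h x x' y y' (hAB x hx y hy) (hAB x hx y' hy') (hAB x' hx' y hy)
    (hAB x' hx' y' hy')).elim hxx' hyy'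

end BicliqueFree

/-- Adjacency in the power-of-norm variant of the projective norm graph:
`N(X + Y) ^ d = x * y` for `(X, x), (Y, y) ∈ E × F`. The case `X + Y = 0` is excluded, so that
points with second coordinate `0` have no neighbours. -/
def NormAdj (F : Type*) {E : Type*} [Field F] [Field E] [Algebra F E] (d : ℕ) (x y : E × F) :
    Prop :=
  x.1 + y.1 ≠ 0 ∧ Algebra.norm F (x.1 + y.1) ^ d = x.2 * y.2

section NormAdj

variable {F E : Type*} [Field F] [Field E] [Algebra F E] {d : ℕ}

lemma NormAdj.symm {x y : E × F} (h : NormAdj F d x y) : NormAdj F d y x := by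
  rwa [NormAdj, add_comm, mul_comm]

variable [FiniteDimensional F E]

lemma NormAdj.snd_ne_zero {x y : E × F} (h : NormAdj F d x y) : x.2 ≠ 0 ∧ y.2 ≠ 0 :=
  mul_ne_zero_iff.1 (h.2 ▸ pow_ne_zero d (Algebra.norm_ne_zero_iff.2 h.1))

lemma NormAdj.eq_of_fst_eq {x x' y : E × F} (h : NormAdj F d x y) (h' : NormAdj F d x' y)
    (hfst : x.1 = x'.1) : x = x' :=
  Prod.ext hfst (mul_right_cancel₀ h.snd_ne_zero.2 (by rw [← h.2, ← h'.2, hfst]))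

/-- Dividing the equation for `(x, y)` by that for `(a, y)` eliminates the second coordinate of `y`;
what remains is a norm equation for `(a.1 + y.1)⁻¹`, shifted by a constant depending on `x`. -/
lemma NormAdj.norm_inv_sub_inv {a x y : E × F} (ha : NormAdj F d a y)
    (hx : NormAdj F d x y) (hax : a.1 ≠ x.1) :
    Algebra.norm F ((a.1 + y.1)⁻¹ - (a.1 - x.1)⁻¹) ^ d =
      x.2 / (a.2 * Algebra.norm F (x.1 - a.1) ^ d) := by
  have hxa : x.1 - a.1 ≠ 0 := sub_ne_zero.2 hax.symm
  have hmul : ((a.1 + y.1)⁻¹ - (a.1 - x.1)⁻¹) * ((a.1 + y.1) * (x.1 - a.1)) = x.1 + y.1 := by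
    rw [← neg_sub x.1 a.1]
    field_simp [ha.1]
    ring
  have hnorm := congr(Algebra.norm F $hmul ^ d)
  rw [map_mul, map_mul, mul_pow, mul_pow, hx.2, ha.2] at hnorm
  rw [eq_div_iff (mul_ne_zero ha.snd_ne_zero.1 (pow_ne_zero d (Algebra.norm_ne_zero_iff.2 hxa)))]
  exact mul_right_cancel₀ hx.snd_ne_zero.2 (by rw [← hnorm]; ring)

lemma bicliqueFree_normAdj [IsGalois F E] (hd : 0 < d) :
    BicliqueFree (Module.finrank F E + 1)
      ((Module.finrank F E)! * d ^ Module.finrank F E + 1) (NormAdj F (E := E) d) := by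
  classical
  intro A B hAB
  by_contra! hcon
  obtain ⟨hA, hB⟩ := hcon
  obtain ⟨a, ha⟩ : A.Nonempty := card_pos.1 (by lia)
  obtain ⟨y₀, hy₀⟩ : B.Nonempty := card_pos.1 (by lia)
  obtain ⟨A', hA', hcard⟩ := exists_subset_card_eq (s := A.erase a) (n := Module.finrank F E)
    (by rw [card_erase_of_mem ha]; lia)
  have hmem {x} (hx : x ∈ A') : x ∈ A := mem_of_mem_erase (hA' hx)
  have hfst {x} (hx : x ∈ A') : a.1 ≠ x.1 := fun h ↦
    ne_of_mem_erase (hA' hx) ((hAB a ha y₀ hy₀).eq_of_fst_eq (hAB x (hmem hx) y₀ hy₀) h).symm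
  have hc : Function.Injective fun x : A' ↦ (a.1 - x.1.1)⁻¹ := fun x x' h ↦
    Subtype.ext ((hAB _ (hmem x.2) y₀ hy₀).eq_of_fst_eq (hAB _ (hmem x'.2) y₀ hy₀)
      (sub_right_injective (inv_injective h)))
  have hinj : Set.InjOn (fun y : E × F ↦ (a.1 + y.1)⁻¹) B := fun y hy y' hy' h ↦
    (hAB a ha y hy).symm.eq_of_fst_eq (hAB a ha y' hy').symm
      (add_right_injective _ (inv_injective h))
  have hle := card_le_of_norm_sub_pow_eq (F := F) (S := B.image fun y ↦ (a.1 + y.1)⁻¹)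
    (by rw [Fintype.card_coe, hcard]) hc hd
    (b := fun x ↦ x.1.2 / (a.2 * Algebra.norm F (x.1.1 - a.1) ^ d)) fun z hz x ↦ by
      obtain ⟨y, hy, rfl⟩ := mem_image.1 hz
      exact (hAB a ha y hy).norm_inv_sub_inv (hAB _ (hmem x.2) y hy) (hfst x.2)
  rw [Finset.card_image_of_injOn hinj, Fintype.card_coe, hcard] at hle
  lia

end NormAdj

/-- Incidence between the points `(x, y)` and the non-vertical lines `y + v = x * u` of the affine
plane over `K`, each carrying a tag in `E`, with opposite tags required. -/
def IncidenceAdj {E K : Type*} [AddGroup E] [Field K] (P L : E × K × K) : Prop :=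
  P.1 + L.1 = 0 ∧ P.2.2 + L.2.2 = P.2.1 * L.2.1

section IncidenceAdj

variable {E K : Type*} [AddGroup E] [Field K]

lemma IncidenceAdj.symm {P L : E × K × K} (h : IncidenceAdj P L) : IncidenceAdj L P :=
  ⟨by rw [eq_neg_of_add_eq_zero_right h.1, neg_add_cancel], by rw [add_comm, h.2, mul_comm]⟩

lemma bicliqueFree_incidenceAdj : BicliqueFree 2 2 (IncidenceAdj (E := E) (K := K)) := by
  refine bicliqueFree_two_two ?_
  rintro ⟨X, x, y⟩ ⟨X', x', y'⟩ ⟨U, u, v⟩ ⟨U', u', v'⟩ ⟨hXU, h₁⟩ ⟨hXU', h₂⟩ ⟨hX'U, h₃⟩ ⟨-, h₄⟩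
  dsimp only at *
  obtain rfl : X = X' := add_right_cancel (hXU.trans hX'U.symm)
  obtain rfl : U = U' := add_left_cancel (hXU.trans hXU'.symm)
  have hdiff : (x - x') * (u - u') = 0 := by linear_combination h₂ + h₃ - h₁ - h₄
  rcases mul_eq_zero.1 hdiff with hx | hu
  · obtain rfl := sub_eq_zero.1 hx
    exact .inl (by rw [add_right_cancel (h₁.trans h₃.symm)])
  · obtain rfl := sub_eq_zero.1 hu
    exact .inr (by rw [add_left_cancel (h₁.trans h₂.symm)])

end IncidenceAdj

section RKGraph

/-- The bipartite graph on `α ⊕ β` whose edges are the pairs in the relation `S`. -/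
def relGraph {α β : Type*} (S : α → β → Prop) : SimpleGraph (α ⊕ β) where
  Adj x y := Sum.LiftRel S (flip S) x y.swap
  symm := ⟨by rintro (x | x) (y | y) h <;> cases h <;> constructor <;> assumption⟩
  loopless := ⟨by rintro (x | x) h <;> cases h⟩

lemma bicliqueFree_relGraph_adj {α β : Type*} {t s : ℕ} {S : α → β → Prop}
    (h : BicliqueFree t s S) (h' : BicliqueFree t s (flip S)) (ht : 0 < t) (hs : 0 < s) :
    BicliqueFree t s (relGraph S).Adj :=
  (h.liftRel h' ht hs).comap Function.injective_id Sum.swap_leftInverse.injective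

lemma BicliqueFree.not_containsSub {V : Type} {G : SimpleGraph V} {t s : ℕ}
    (h : BicliqueFree t s G.Adj) : ¬ ContainsSub (completeBipartiteGraph (Fin t) (Fin s)) G := by
  rintro ⟨f, hf⟩
  have hfree : BicliqueFree t s fun (i : Fin t) (j : Fin s) ↦ G.Adj (f (.inl i)) (f (.inr j)) :=
    h.comap (hf.comp Sum.inl_injective) (hf.comp Sum.inr_injective)
  simpa using hfree univ univ fun i _ j _ ↦ f.map_adj (by simp)

lemma isRKGraph_of_fibers {V I : Type} [Fintype V] [Fintype I] [DecidableEq I] {G : SimpleGraph V}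
    {π : V → I} {k : ℕ} (hcard : ∀ i, #{v | π v = i} ≤ k)
    (hadj : ∀ i i', i ≠ i' → ∃ v v', π v = i ∧ π v' = i' ∧ G.Adj v v') :
    IsRKGraph G (Fintype.card I) k := by
  let e := Fintype.equivFin I
  refine ⟨fun j ↦ {v | π v = e.symm j}, fun v ↦ ⟨e (π v), by simp, fun j hj ↦ ?_⟩,
    fun j ↦ hcard _, fun j j' hne ↦ ?_⟩
  · simpa [Equiv.eq_symm_apply, eq_comm] using hj
  · simpa [and_assoc] using hadj _ _ (e.symm.injective.ne hne)

lemma fGraph_le_of_isRKGraph {V W : Type} [Fintype V] {H : SimpleGraph W} {G : SimpleGraph V}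
    {r k : ℕ} (hfree : ¬ ContainsSub H G) (hrk : IsRKGraph G r k) : fGraph H r ≤ k := by
  obtain ⟨P, hpart, hcard, hadj⟩ := hrk
  let e := Fintype.equivFin V
  refine Nat.sInf_le ⟨_, G.map e.toEmbedding, ?_, fun i ↦ (P i).map e.toEmbedding,
    fun v ↦ ?_, fun i ↦ ?_, fun i j hij ↦ ?_⟩
  · rintro ⟨f, hf⟩
    exact hfree ⟨(Iso.map e G).symm.toHom.comp f, (Iso.map e G).symm.injective.comp hf⟩
  · simpa [mem_map_equiv] using hpart (e.symm v)
  · simpa using hcard i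
  · obtain ⟨u, hu, w, hw, huw⟩ := hadj i j hij
    exact ⟨e u, mem_map_of_mem _ hu, e w, mem_map_of_mem _ hw,
      (map_adj_apply (f := e.toEmbedding)).2 huw⟩

end RKGraph

/-- Vertices can be attached to the indices in `I`, with one left vertex of `i` for each element of
`Λ` and one right vertex for each element of `Ρ`, and joined by a `K_{t,s}`-free bipartite
graph in such a way that whenever `C i i'` holds, some left vertex of `i` is joined to some right
vertex of `i'`. -/
def Linkable {I : Type*} (t s : ℕ) (Λ Ρ : Type*) (C : I → I → Prop) : Prop :=
  ∃ S : I × Λ → I × Ρ → Prop, BicliqueFree t s S ∧ BicliqueFree t s (flip S) ∧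
    ∀ i i', C i i' → ∃ l r, S (i, l) (i', r)

section Linkable

variable {I J Λ Ρ Λ' Ρ' α : Type*} {t s : ℕ} {C C' : I → I → Prop}

lemma Linkable.of_symmetric {R : α → α → Prop} (hR : BicliqueFree t s R)
    (hsymm : ∀ x y, R x y → R y x) {l : I × Λ → α} {r : I × Ρ → α} (hl : Function.Injective l)
    (hr : Function.Injective r) (hC : ∀ i i', C i i' → ∃ k m, R (l (i, k)) (r (i', m))) :
    Linkable t s Λ Ρ C := by
  refine ⟨fun x y ↦ R (l x) (r y), hR.comap hl hr, ?_, hC⟩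
  have hflip : flip (fun x y ↦ R (l x) (r y)) = fun y x ↦ R (r y) (l x) := by
    ext y x
    exact ⟨hsymm _ _, hsymm _ _⟩
  rw [hflip]
  exact hR.comap hr hl

lemma Linkable.mono {t' s' : ℕ} (h : Linkable t s Λ Ρ C) (ht : t ≤ t') (hs : s ≤ s') :
    Linkable t' s' Λ Ρ C :=
  let ⟨S, hS, hS', hC⟩ := h
  ⟨S, hS.mono ht hs, hS'.mono ht hs, hC⟩

lemma Linkable.comap (h : Linkable t s Λ Ρ C) {f : J → I} (hf : Function.Injective f) :
    Linkable t s Λ Ρ fun j j' ↦ C (f j) (f j') := by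
  obtain ⟨S, hS, hS', hC⟩ := h
  have hl : Function.Injective (Prod.map f id : J × Λ → I × Λ) := hf.prodMap Function.injective_id
  have hr : Function.Injective (Prod.map f id : J × Ρ → I × Ρ) := hf.prodMap Function.injective_id
  exact ⟨_, hS.comap hl hr, hS'.comap hr hl, fun j j' ↦ hC (f j) (f j')⟩

lemma Linkable.or (h : Linkable t s Λ Ρ C) (h' : Linkable t s Λ' Ρ' C') (ht : 0 < t)
    (hs : 0 < s) : Linkable t s (Λ ⊕ Λ') (Ρ ⊕ Ρ') fun i i' ↦ C i i' ∨ C' i i' := by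
  obtain ⟨S, hS, hSflip, hC⟩ := h
  obtain ⟨S', hS', hSflip', hC'⟩ := h'
  let l := Equiv.prodSumDistrib I Λ Λ'
  let r := Equiv.prodSumDistrib I Ρ Ρ'
  have hflip := hSflip.liftRel hSflip' ht hs
  rw [← flip_liftRel] at hflip
  refine ⟨fun x y ↦ Sum.LiftRel S S' (l x) (r y), (hS.liftRel hS' ht hs).comap l.injective
    r.injective, hflip.comap r.injective l.injective, ?_⟩
  rintro i i' (hi | hi)
  · obtain ⟨k, m, hkm⟩ := hC i i' hi
    exact ⟨.inl k, .inl m, .inl hkm⟩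
  · obtain ⟨k, m, hkm⟩ := hC' i i' hi
    exact ⟨.inr k, .inr m, .inr hkm⟩

lemma Linkable.fGraph_le {I Λ Ρ : Type} [Fintype I] [Fintype Λ] [Fintype Ρ] {C : I → I → Prop}
    (h : Linkable t s Λ Ρ C) (hC : ∀ i i', i ≠ i' → C i i') (ht : 0 < t) (hs : 0 < s) :
    fGraph (completeBipartiteGraph (Fin t) (Fin s)) (Fintype.card I) ≤
      Fintype.card Λ + Fintype.card Ρ := by
  classical
  obtain ⟨S, hS, hSflip, hlink⟩ := h
  refine fGraph_le_of_isRKGraph (bicliqueFree_relGraph_adj hS hSflip ht hs).not_containsSub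
    (isRKGraph_of_fibers (π := Sum.elim Prod.fst Prod.fst) (fun i ↦ ?_) fun i i' hne ↦ ?_)
  · rw [← Fintype.card_sum, ← Finset.card_univ]
    refine card_le_card_of_injOn (Sum.map Prod.snd Prod.snd) (fun _ _ ↦ mem_coe.2 (mem_univ _)) ?_
    rintro (⟨x, k⟩ | ⟨x, k⟩) hx (⟨y, m⟩ | ⟨y, m⟩) hy hxy <;> simp_all
  · obtain ⟨k, m, hkm⟩ := hlink i i' (hC i i' hne)
    exact ⟨.inl (i, k), .inr (i', m), rfl, rfl, .inl hkm⟩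

end Linkable

section Gadgets

lemma exists_isPrimitiveRoot {F : Type*} [Field F] [Finite F] {d m : ℕ}
    (hcard : Nat.card F - 1 = d * m) : ∃ ζ : F, IsPrimitiveRoot ζ m := by
  obtain ⟨g, hg⟩ := IsCyclic.exists_ofOrder_eq_natCard (α := Fˣ)
  have hpos : 0 < Nat.card Fˣ := Nat.card_pos
  refine ⟨((g ^ d : Fˣ) : F), IsPrimitiveRoot.coe_units_iff.2 ?_⟩
  exact (IsPrimitiveRoot.orderOf g).pow (hg ▸ hpos) (by rw [hg, Nat.card_units, hcard])

lemma exists_pow_mul_pow_eq {F : Type*} [Field F] {a h : ℕ} [NeZero (h * a)] {ζ y : F}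
    (hζ : IsPrimitiveRoot ζ (h * a)) (hy : y ^ (h * a) = 1) (i : Fin a) (j : Fin h) :
    ∃ (k : Fin h) (m : Fin a),
      ζ ^ (finProdFinEquiv (k, i) : ℕ) * ζ ^ (finProdFinEquiv (j, m) : ℕ) = y := by
  -- As `finProdFinEquiv (k, i)` is `i + a * k`, the sum of the two exponents regroups as
  -- `(i + a * j) + (m + a * k)`.
  have hζ₀ : ζ ≠ 0 := hζ.ne_zero (NeZero.ne _)
  have hpow (e : ℕ) : (ζ ^ e) ^ (h * a) = 1 := by rw [pow_right_comm, hζ.pow_eq_one, one_pow]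
  obtain ⟨n, hn, hζn⟩ := hζ.eq_pow_of_pow_eq_one
    (ξ := y / (ζ ^ (i : ℕ) * ζ ^ (a * j))) (by rw [div_pow, mul_pow, hpow, hpow, hy]; simp)
  obtain ⟨⟨k, m⟩, hkm⟩ := finProdFinEquiv.surjective (⟨n, hn⟩ : Fin (h * a))
  refine ⟨k, m, ?_⟩
  rw [← Fin.val_inj, finProdFinEquiv_apply_val] at hkm
  rw [eq_div_iff (by positivity), ← show _ = n from hkm] at hζn
  rw [← hζn, finProdFinEquiv_apply_val, finProdFinEquiv_apply_val]
  ring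

lemma linkable_norm {F E : Type*} [Field F] [Finite F] [Field E] [Algebra F E]
    [FiniteDimensional F E] [IsGalois F E] {d a h : ℕ} (hcard : Nat.card F - 1 = d * (h * a))
    (hah : a ≤ h) :
    Linkable (Module.finrank F E + 1) ((Module.finrank F E)! * d ^ Module.finrank F E + 1)
      (Fin h) (Fin a) (fun i i' : E × Fin a ↦ i.1 + i'.1 ≠ 0) := by
  have hpos : 0 < d * (h * a) := by
    rw [← hcard]
    exact Nat.sub_pos_of_lt Finite.one_lt_card
  have hd : 0 < d := Nat.pos_of_mul_pos_right hpos
  have : NeZero (h * a) := ⟨(Nat.pos_of_mul_pos_left hpos).ne'⟩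
  obtain ⟨ζ, hζ⟩ := exists_isPrimitiveRoot hcard
  have hinj {m n : Fin (h * a)} (hmn : ζ ^ (m : ℕ) = ζ ^ (n : ℕ)) : m = n :=
    Fin.ext (hζ.pow_inj m.2 n.2 hmn)
  let label (k : Fin h) (i : Fin a) : F := ζ ^ (finProdFinEquiv (k, i) : ℕ)
  have hlabel {k k' i i'} (heq : label k i = label k' i') : k = k' ∧ i = i' :=
    Prod.ext_iff.1 (finProdFinEquiv.injective (hinj heq))
  refine .of_symmetric (bicliqueFree_normAdj hd) (fun x y ↦ NormAdj.symm)
    (l := fun x ↦ (x.1.1, label x.2 x.1.2))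
    (r := fun x ↦ (x.1.1, label (x.1.2.castLE hah) x.2)) ?_ ?_ ?_
  · rintro ⟨⟨X, i⟩, k⟩ ⟨⟨Y, j⟩, m⟩ hxy
    obtain ⟨rfl, hxy⟩ := Prod.ext_iff.1 hxy
    obtain ⟨rfl, rfl⟩ := hlabel hxy
    rfl
  · rintro ⟨⟨X, i⟩, k⟩ ⟨⟨Y, j⟩, m⟩ hxy
    obtain ⟨rfl, hxy⟩ := Prod.ext_iff.1 hxy
    obtain ⟨hij, rfl⟩ := hlabel hxy
    obtain rfl := Fin.castLE_injective hah hij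
    rfl
  · rintro ⟨X, i⟩ ⟨Y, j⟩ hXY
    have hroot : (Algebra.norm F (X + Y) ^ d) ^ (h * a) = 1 := by
      have := Fintype.ofFinite F
      rw [← pow_mul, ← hcard, Nat.card_eq_fintype_card]
      exact FiniteField.pow_card_sub_one_eq_one _ (Algebra.norm_ne_zero_iff.2 hXY)
    obtain ⟨k, m, hkm⟩ := exists_pow_mul_pow_eq hζ hroot i (j.castLE hah)
    exact ⟨k, m, hXY, hkm.symm⟩

lemma linkable_add_eq_zero {E K G : Type*} [AddGroup E] [Field K] [AddCommGroup G]
    (e : G × G ≃+ K) : Linkable 2 2 G G (fun i i' : E × K × G ↦ i.1 + i'.1 = 0) := by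
  refine .of_symmetric bicliqueFree_incidenceAdj (fun P L ↦ IncidenceAdj.symm)
    (l := fun x ↦ (x.1.1, x.1.2.1, e (x.1.2.2, x.2)))
    (r := fun x ↦ (x.1.1, x.1.2.1, e (x.2, x.1.2.2))) ?_ ?_ ?_
  · rintro ⟨⟨X, x, i⟩, k⟩ ⟨⟨Y, y, j⟩, m⟩ hxy
    simp_all
  · rintro ⟨⟨X, x, i⟩, k⟩ ⟨⟨Y, y, j⟩, m⟩ hxy
    simp_all
  · rintro ⟨X, x, i⟩ ⟨Y, y, j⟩ hXY
    obtain ⟨z, hz⟩ := e.surjective (x * y)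
    refine ⟨z.2 - j, z.1 - i, hXY, ?_⟩
    rw [← map_add, ← hz]
    simp

lemma nonempty_zmod_prod_zmod_addEquiv (p : ℕ) [Fact p.Prime] :
    Nonempty (ZMod p × ZMod p ≃+ GaloisField p 2) :=
  ⟨(LinearEquiv.ofFinrankEq (R := ZMod p) _ _ (by
    rw [GaloisField.finrank p two_ne_zero, Module.finrank_prod, Module.finrank_self])).toAddEquiv⟩

lemma linkable_fin_add_eq_zero {E : Type*} [AddGroup E] {a p : ℕ} [Fact p.Prime] (hap : a ≤ p ^ 3) :
    Linkable 2 2 (ZMod p) (ZMod p) (fun i i' : E × Fin a ↦ i.1 + i'.1 = 0) := by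
  have := Fintype.ofFinite (GaloisField p 2)
  obtain ⟨e⟩ := nonempty_zmod_prod_zmod_addEquiv p
  obtain ⟨f⟩ : Nonempty (Fin a ↪ GaloisField p 2 × ZMod p) := by
    refine Function.Embedding.nonempty_of_card_le ?_
    rwa [Fintype.card_fin, Fintype.card_prod, ← Nat.card_eq_fintype_card,
      GaloisField.card p 2 two_ne_zero, ZMod.card, ← pow_succ]
  exact (linkable_add_eq_zero e).comap (Function.injective_id.prodMap f.injective)

lemma fGraph_le_of_prime {t q d a h p : ℕ} (hq : IsPrimePow q) (hcard : q - 1 = d * (h * a))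
    (ht : 0 < t) (hah : a ≤ h) (hp : p.Prime) (hap : a ≤ p ^ 3) :
    fGraph (completeBipartiteGraph (Fin (t + 1)) (Fin (t ! * d ^ t + 1))) (q ^ t * a) ≤
      a + h + 2 * p := by
  have := Fact.mk hp
  obtain ⟨p', n, hp', hn, rfl⟩ := (isPrimePow_nat_iff q).1 hq
  have := Fact.mk hp'
  have : NeZero t := ⟨ht.ne'⟩
  have hd : 0 < d := by
    refine Nat.pos_of_mul_pos_right (b := h * a) ?_
    rw [← hcard]
    exact Nat.sub_pos_of_lt hq.one_lt
  let F := GaloisField p' n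
  let E := FiniteField.Extension F p' t
  have := Fintype.ofFinite E
  have hF : Nat.card F = p' ^ n := GaloisField.card p' n hn.ne'
  have hE : Module.finrank F E = t := FiniteField.finrank_extension F p' t
  have hnorm := linkable_norm (E := E) (hF ▸ hcard) hah
  have hzero := linkable_fin_add_eq_zero (E := E) hap
  rw [hE] at hnorm
  have hs : 2 ≤ t ! * d ^ t + 1 := Nat.succ_le_succ (Nat.mul_pos t.factorial_pos (pow_pos hd t))
  have hle := (hnorm.or (hzero.mono (by lia) hs) t.succ_pos (Nat.succ_pos _)).fGraph_le
    (fun i i' _ ↦ ne_or_eq (i.1 + i'.1) 0) t.succ_pos (Nat.succ_pos _)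
  have hcardE : Fintype.card E = (p' ^ n) ^ t := by
    rw [← Nat.card_eq_fintype_card, FiniteField.natCard_extension, hF]
  simp only [Fintype.card_prod, Fintype.card_sum, Fintype.card_fin, ZMod.card, hcardE] at hle
  lia

end Gadgets

lemma exists_prime_le_pow_three {a : ℕ} (ha : 0 < a) :
    ∃ p : ℕ, p.Prime ∧ a ≤ p ^ 3 ∧ (p : ℝ) ≤ 4 * (a : ℝ) ^ (1 / 3 : ℝ) := by
  set x : ℝ := (a : ℝ) ^ (1 / 3 : ℝ)
  have hx : 1 ≤ x := Real.one_le_rpow (Nat.one_le_cast.2 ha) (by norm_num)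
  have hx3 : x ^ 3 = a := by
    rw [← Real.rpow_mul_natCast a.cast_nonneg]
    norm_num
  obtain ⟨p, hp, hlt, hle⟩ := Nat.exists_prime_lt_and_le_two_mul ⌈x⌉₊
    (Nat.ceil_pos.2 (one_pos.trans_le hx)).ne'
  have hxp : x ≤ p := (Nat.le_ceil x).trans (Nat.cast_le.2 hlt.le)
  refine ⟨p, hp, ?_, ?_⟩
  · rw [← Nat.cast_le (α := ℝ), Nat.cast_pow, ← hx3]
    gcongr
  · have hceil : (⌈x⌉₊ : ℝ) < x + 1 := Nat.ceil_lt_add_one (by linarith)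
    have hle' : (p : ℝ) ≤ 2 * ⌈x⌉₊ := by exact_mod_cast hle
    linarith

lemma natCast_rpow_le_natCast_rpow {m n : ℕ} (hmn : m ≤ n) {r s : ℝ} (hr : 0 < r) (hrs : r ≤ s) :
    (m : ℝ) ^ r ≤ (n : ℝ) ^ s := by
  obtain rfl | hm := m.eq_zero_or_pos
  · rw [Nat.cast_zero, Real.zero_rpow hr.ne']
    positivity
  calc (m : ℝ) ^ r
    _ ≤ (m : ℝ) ^ s := Real.rpow_le_rpow_of_exponent_le (Nat.one_le_cast.2 hm) hrs
    _ ≤ (n : ℝ) ^ s := by gcongr; exact hr.le.trans hrs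

theorem stmt13_general {t q d a h : ℕ} (ht : 2 ≤ t) (hq : IsPrimePow q) (hd : d ∣ q - 1)
    (hah : a ≤ h) (hm : h * a = (q - 1) / d) :
    (fGraph (completeBipartiteGraph (Fin t)
      (Fin ((t - 1)! * d ^ (t - 1) + 1))) (q ^ (t - 1) * a) : ℝ) ≤
        a + h + 8 * (a : ℝ) ^ (1 / 3 : ℝ) := by
  obtain ⟨t, rfl⟩ := Nat.exists_eq_add_of_le' (Nat.one_le_of_lt ht)
  rw [Nat.add_sub_cancel]
  have hcard : q - 1 = d * (h * a) := by rw [hm, Nat.mul_div_cancel' hd]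
  have ha : 0 < a := by
    refine Nat.pos_of_mul_pos_left (a := d * h) ?_
    rw [mul_assoc, ← hcard]
    exact Nat.sub_pos_of_lt hq.one_lt
  obtain ⟨p, hp, hap, hpa⟩ := exists_prime_le_pow_three ha
  have hle := Nat.cast_le (α := ℝ).2 (fGraph_le_of_prime hq hcard (by lia : 0 < t) hah hp hap)
  push_cast at hle
  linarith

/-- For every `t ≥ 2` there is `C_t > 0` such that: if `q` is an even power of an odd prime,
`d` is a positive integer dividing `q−1`, and `a ≤ h` are positive integers with
`h·a = (q−1)/d`, then `f(q^{t−1}·a, K_{t,(t−1)!·d^{t−1}+1}) ≤ a + h + C_t·h^{2/5}`. -/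
theorem stmt13 (t : ℕ) (ht : 2 ≤ t) :
    ∃ C : ℝ, 0 < C ∧ ∀ q d a h : ℕ,
      (∃ p j : ℕ, p.Prime ∧ Odd p ∧ 1 ≤ j ∧ q = p ^ (2 * j)) →
      0 < d → d ∣ q - 1 → 0 < a → a ≤ h → h * a = (q - 1) / d →
      (fGraph (completeBipartiteGraph (Fin t)
          (Fin (Nat.factorial (t - 1) * d ^ (t - 1) + 1))) (q ^ (t - 1) * a) : ℝ)
        ≤ (a : ℝ) + (h : ℝ) + C * (h : ℝ) ^ ((2 : ℝ) / 5) := by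
  refine ⟨8, by norm_num, ?_⟩
  rintro q d a h ⟨p, j, hp, -, hj, rfl⟩ - hd - hah hm
  refine (stmt13_general ht (hp.isPrimePow.pow (by lia)) hd hah hm).trans ?_
  gcongr (a : ℝ) + h + 8 * ?_
  exact natCast_rpow_le_natCast_rpow (r := 1 / 3) (s := 2 / 5) hah (by norm_num) (by norm_num)
end
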